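/- arXiv:0907.5524 — 5 statements merged into one kernel-verified Lean document; each statement's English description precedes it below -/
import Mathlib

section
/- Let N ≥ 2, α ∈ (0,2), and let g : S^{N-1} → (0,∞) be continuous and even (g(-θ) = g(θ)). Set J(z) = g(z/|z|) |z|^{-(N+α)} for z ≠ 0. Let q : ℝ → ℝ be a bounded C² function with bounded first and second derivatives. Then for every unit vector e ∈ S^{N-1} and every r ∈ ℝ, the function z ↦ q(r + e·z) − q(r) − q'(r)(e·z)·1_{{|z| ≤ 1}}(z) times J(z) is Lebesgue integrable on ℝ^N, and ∫_{ℝ^N} ( q(r + e·z) − q(r) − q'(r)(e·z) 1_{{|z| ≤ 1}}(z) ) J(z) dz = a₁₁(e) · ∫_ℝ ( q(r + t) − q(r) − q'(r) t · 1_{{|t| ≤ 1}}(t) ) |t|^{-(1+α)} dt. -/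
/-!
Write `h t = q (r + t) + q (r - t) - 2 * q r` for the second difference of `q` at `r`.

A second-order Taylor bound shows that the compensated increment of `q` is `O(min 1 ‖z‖²)`, which is
integrable against a kernel of size `‖z‖ ^ (-(n + α))` in dimension `n` because `0 < α < 2`
(`integrable_min_one_sq_mul_rpow`, by polar coordinates). Both the `N`-dimensional and the
one-dimensional integrand are instances of this (`integrable_compensated`). Since the kernels are
even, symmetrizing under `z ↦ -z` removes the gradient correction, so that each integral is half
the integral of `h` against its kernel (`two_mul_integral_compensated`); in particular the different
truncations `‖z‖ ≤ 1` and `|t| ≤ 1` play no role.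

It remains to compare the integral of `h (e·z) J z` with that of `h t * |t| ^ (-(1 + α))`. The map
`(t, y) ↦ t e + φ y` is a volume-preserving isometry (`frame_measurePreserving`), so Fubini applies,
and on the slice at height `t ≠ 0` the substitution `y = t u` together with the homogeneity and
evenness of `J` produces the factor `|t| ^ (N - 1) * |t| ^ (-(N + α)) = |t| ^ (-(1 + α))`
(`integral_slice`).
-/

open MeasureTheory Metric Filter
open scoped RealInnerProductSpace Topology

/-! ### Taylor bound -/

lemma taylor_bound {q : ℝ → ℝ} (hq : ContDiff ℝ 2 q) {M : ℝ}
    (hM : ∀ r, |deriv (deriv q) r| ≤ M) (r t : ℝ) :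
    |q (r + t) - q r - deriv q r * t| ≤ M * t ^ 2 := by
  have hq1 : Differentiable ℝ q := hq.differentiable (by norm_num)
  have hq2 : Differentiable ℝ (deriv q) := by
    have : ContDiff ℝ 1 (deriv q) := by
      have h2 : ContDiff ℝ (1 + 1) q := by norm_num; exact hq
      exact (contDiff_succ_iff_deriv.1 h2).2.2
    exact this.differentiable (by norm_num)
  have hM0 : 0 ≤ M := (abs_nonneg _).trans (hM 0)
  have hlip : ∀ s, |deriv q (r + s) - deriv q r| ≤ M * |s| := by
    intro s
    have := Convex.norm_image_sub_le_of_norm_deriv_le (f := deriv q) (s := Set.univ) (x := r)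
      (y := r + s) (C := M) (fun x _ => hq2 x) (fun x _ => hM x) convex_univ
      (Set.mem_univ _) (Set.mem_univ _)
    simpa using this
  have hder : ∀ s, HasDerivAt (fun s => q (r + s) - deriv q r * s)
      (deriv q (r + s) - deriv q r) s := by
    intro s
    have h1 : HasDerivAt (fun s => q (r + s)) (deriv q (r + s)) s :=
      (hq1 (r + s)).hasDerivAt.comp_const_add r s
    have h2 : HasDerivAt (fun s => deriv q r * s) (deriv q r) s := by
      simpa using (hasDerivAt_id s).const_mul (deriv q r)
    exact h1.sub h2
  have := Convex.norm_image_sub_le_of_norm_hasDerivWithin_le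
    (f := fun s => q (r + s) - deriv q r * s) (s := closedBall (0 : ℝ) |t|) (x := 0) (y := t)
    (C := M * |t|) (fun s _ => (hder s).hasDerivWithinAt)
    (fun s hs => (hlip s).trans (by
      have : |s| ≤ |t| := by simpa using hs
      gcongr)) (convex_closedBall _ _) (by simp) (by simp)
  simp only [Real.norm_eq_abs, add_zero, mul_zero, sub_zero] at this
  calc _ = |q (r + t) - deriv q r * t - q r| := by congr 1; ring
    _ ≤ M * |t| * |t| := this
    _ = M * t ^ 2 := by rw [mul_assoc, abs_mul_abs_self]; ring

/-! ### Integrability and symmetrization -/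

section Integrability

variable {E : Type*} [NormedAddCommGroup E] [NormedSpace ℝ E] [FiniteDimensional ℝ E]
  [MeasurableSpace E] [BorelSpace E] (μ : Measure E) [μ.IsAddHaarMeasure]

lemma integrable_min_one_sq_mul_rpow [Nontrivial E] {α : ℝ} (hα0 : 0 < α) (hα2 : α < 2) :
    Integrable (fun z : E => min 1 (‖z‖ ^ 2) * ‖z‖ ^ (-((Module.finrank ℝ E : ℝ) + α))) μ := by
  rw [integrable_fun_norm_addHaar μ
    (f := fun y : ℝ => min 1 (y ^ 2) * y ^ (-((Module.finrank ℝ E : ℝ) + α)))]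
  have hn : 0 < Module.finrank ℝ E := Module.finrank_pos
  -- in polar coordinates the radial density is `min 1 y² * y ^ (-1 - α)`
  have key : ∀ y : ℝ, 0 < y → y ^ (Module.finrank ℝ E - 1) •
      (min 1 (y ^ 2) * y ^ (-((Module.finrank ℝ E : ℝ) + α))) =
      min 1 (y ^ 2) * y ^ (-1 - α) := by
    intro y hy
    rw [smul_eq_mul, ← Real.rpow_natCast y (Module.finrank ℝ E - 1), mul_left_comm,
      ← Real.rpow_add hy, Nat.cast_sub hn]
    congr 2
    push_cast
    ring
  rw [← Set.Ioc_union_Ioi_eq_Ioi (zero_le_one (α := ℝ))]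
  refine IntegrableOn.union ?_ ?_
  · have h : IntegrableOn (fun y : ℝ => y ^ (1 - α)) (Set.Ioc 0 1) := by
      rw [← intervalIntegrable_iff_integrableOn_Ioc_of_le zero_le_one]
      exact intervalIntegral.intervalIntegrable_rpow' (by linarith)
    refine h.congr_fun (fun y hy => ?_) measurableSet_Ioc
    have hy1 : y ^ 2 ≤ 1 := pow_le_one₀ hy.1.le hy.2
    simp only
    rw [key y hy.1, min_eq_right hy1, ← Real.rpow_natCast y 2, ← Real.rpow_add hy.1]
    congr 1
    push_cast
    ring
  · have h : IntegrableOn (fun y : ℝ => y ^ (-1 - α)) (Set.Ioi 1) :=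
      integrableOn_Ioi_rpow_of_lt (by linarith) zero_lt_one
    refine h.congr_fun (fun y hy => ?_) measurableSet_Ioi
    have hy' : (1 : ℝ) < y := hy
    have hy1 : 1 ≤ y ^ 2 := one_le_pow₀ hy'.le
    simp only
    rw [key y (by linarith), min_eq_left hy1, one_mul]

variable {μ}

/-- The compensated increment of `q` along a linear form of norm at most one is integrable against
any kernel dominated by `‖z‖ ^ (-(dim E + α))`. -/
lemma integrable_compensated [Nontrivial E] {α : ℝ} (hα0 : 0 < α) (hα2 : α < 2)
    {q : ℝ → ℝ} (hq : ContDiff ℝ 2 q) (hq_bdd : ∃ M, ∀ r, |q r| ≤ M)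
    (hq''_bdd : ∃ M, ∀ r, |deriv (deriv q) r| ≤ M) (r : ℝ)
    (l : E →L[ℝ] ℝ) (hl : ∀ z, |l z| ≤ ‖z‖)
    {K : E → ℝ} (hK : AEStronglyMeasurable K μ) {G : ℝ}
    (hKb : ∀ z, z ≠ 0 → |K z| ≤ G * ‖z‖ ^ (-((Module.finrank ℝ E : ℝ) + α))) :
    Integrable (fun z => (q (r + l z) - q r - (if ‖z‖ ≤ 1 then deriv q r * l z else 0)) * K z)
      μ := by
  obtain ⟨M, hM⟩ := hq_bdd
  obtain ⟨M', hM'⟩ := hq''_bdd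
  have hM0 : 0 ≤ M := (abs_nonneg _).trans (hM 0)
  have hM'0 : 0 ≤ M' := (abs_nonneg _).trans (hM' 0)
  have hb : ∀ z : E, |q (r + l z) - q r - (if ‖z‖ ≤ 1 then deriv q r * l z else 0)| ≤
      (2 * M + M') * min 1 (‖z‖ ^ 2) := by
    intro z
    split_ifs with hz
    · rw [min_eq_right (pow_le_one₀ (norm_nonneg _) hz)]
      refine (taylor_bound hq hM' r (l z)).trans ?_
      have : (l z) ^ 2 ≤ ‖z‖ ^ 2 := by
        rw [← sq_abs]; exact pow_le_pow_left₀ (abs_nonneg _) (hl z) 2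
      nlinarith [sq_nonneg ‖z‖]
    · rw [min_eq_left (one_le_pow₀ (not_le.1 hz).le), sub_zero]
      have := abs_sub (q (r + l z)) (q r)
      linarith [hM (r + l z), hM r]
  have hmeas : Measurable
      (fun z => q (r + l z) - q r - (if ‖z‖ ≤ 1 then deriv q r * l z else 0)) := by
    have hqc : Continuous q := hq.continuous
    refine Measurable.sub (by fun_prop) (Measurable.ite ?_ (by fun_prop) measurable_const)
    exact measurableSet_le measurable_norm measurable_const
  refine Integrable.mono' ((integrable_min_one_sq_mul_rpow μ hα0 hα2).const_mul ((2 * M + M') * G))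
    (hmeas.aestronglyMeasurable.mul hK) ?_
  filter_upwards [Measure.ae_ne μ (0 : E)] with z hz
  rw [Real.norm_eq_abs, abs_mul]
  calc _ ≤ ((2 * M + M') * min 1 (‖z‖ ^ 2)) *
        (G * ‖z‖ ^ (-((Module.finrank ℝ E : ℝ) + α))) :=
        mul_le_mul (hb z) (hKb z hz) (abs_nonneg _) (by positivity)
    _ = _ := by ring

/-- Symmetrization under `z ↦ -z`: against an even kernel the gradient correction cancels, and the
compensated increment may be replaced by the second difference of `q`. -/
lemma two_mul_integral_compensated {q : ℝ → ℝ} {r c : ℝ} (l : E →L[ℝ] ℝ) {K : E → ℝ}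
    (hKe : ∀ z, K (-z) = K z)
    (hint : Integrable
      (fun z => (q (r + l z) - q r - (if ‖z‖ ≤ 1 then c * l z else 0)) * K z) μ) :
    Integrable (fun z => (q (r + l z) + q (r - l z) - 2 * q r) * K z) μ ∧
    2 * ∫ z, (q (r + l z) - q r - (if ‖z‖ ≤ 1 then c * l z else 0)) * K z ∂μ =
      ∫ z, (q (r + l z) + q (r - l z) - 2 * q r) * K z ∂μ := by
  have hsum : ∀ z, (q (r + l z) + q (r - l z) - 2 * q r) * K z =
      (q (r + l z) - q r - (if ‖z‖ ≤ 1 then c * l z else 0)) * K z +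
      (q (r + l (-z)) - q r - (if ‖-z‖ ≤ 1 then c * l (-z) else 0)) * K (-z) := by
    intro z
    rw [hKe, norm_neg, map_neg, ← sub_eq_add_neg]
    split_ifs <;> ring
  have hneg := hint.comp_neg
  constructor
  · simp_rw [hsum]
    exact hint.add hneg
  · simp_rw [hsum]
    rw [integral_add hint hneg, integral_neg_eq_self
      (fun z => (q (r + l z) - q r - (if ‖z‖ ≤ 1 then c * l z else 0)) * K z) μ, two_mul]

end Integrability

/-! ### Orthogonal coordinates along `e` and the slices of the kernel -/

section Frame

variable {N : ℕ} {e : EuclideanSpace ℝ (Fin N)}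
  {φ : EuclideanSpace ℝ (Fin (N - 1)) →ₗᵢ[ℝ] EuclideanSpace ℝ (Fin N)}

lemma inner_frame (hφ : LinearMap.range φ.toLinearMap = (ℝ ∙ e)ᗮ)
    (u : EuclideanSpace ℝ (Fin (N - 1))) : ⟪e, φ u⟫ = 0 := by
  have : φ u ∈ (ℝ ∙ e)ᗮ := by rw [← hφ]; exact ⟨u, rfl⟩
  exact Submodule.mem_orthogonal_singleton_iff_inner_right.1 this

lemma norm_frame_sq (he : ‖e‖ = 1) (hφ : LinearMap.range φ.toLinearMap = (ℝ ∙ e)ᗮ)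
    (t : ℝ) (u : EuclideanSpace ℝ (Fin (N - 1))) :
    ‖t • e + φ u‖ ^ 2 = t ^ 2 + ‖u‖ ^ 2 := by
  rw [norm_add_sq_real, inner_smul_left, inner_frame hφ, norm_smul, he, φ.norm_map]
  simp

lemma frame_measurePreserving (hN : 2 ≤ N) (he : ‖e‖ = 1)
    (hφ : LinearMap.range φ.toLinearMap = (ℝ ∙ e)ᗮ) :
    MeasurePreserving (fun p : ℝ × EuclideanSpace ℝ (Fin (N - 1)) => p.1 • e + φ p.2) ∧
    MeasurableEmbedding (fun p : ℝ × EuclideanSpace ℝ (Fin (N - 1)) => p.1 • e + φ p.2) := by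
  let L : WithLp 2 (ℝ × EuclideanSpace ℝ (Fin (N - 1))) →ₗᵢ[ℝ] EuclideanSpace ℝ (Fin N) :=
    { toFun := fun p => p.fst • e + φ p.snd
      map_add' := fun p p' => by
        simp only [WithLp.add_fst, WithLp.add_snd, map_add, add_smul]; abel
      map_smul' := fun c p => by
        simp [mul_smul]
      norm_map' := fun p => by
        have h : ‖p.fst • e + φ p.snd‖ ^ 2 = ‖p‖ ^ 2 := by
          rw [norm_frame_sq he hφ, WithLp.prod_norm_sq_eq_of_L2]
          simp
        exact (sq_eq_sq₀ (norm_nonneg _) (norm_nonneg _)).1 h }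
  have hfin : Module.finrank ℝ (WithLp 2 (ℝ × EuclideanSpace ℝ (Fin (N - 1)))) =
      Module.finrank ℝ (EuclideanSpace ℝ (Fin N)) := by
    rw [(WithLp.linearEquiv 2 ℝ (ℝ × EuclideanSpace ℝ (Fin (N - 1)))).finrank_eq]
    simp only [Module.finrank_prod, Module.finrank_self, finrank_euclideanSpace_fin]
    omega
  let ψ := L.toLinearIsometryEquiv hfin
  constructor
  · exact ψ.measurePreserving.comp (WithLp.volume_preserving_toLp ℝ _)
  · exact ψ.toHomeomorph.measurableEmbedding.comp
      (MeasurableEquiv.toLp 2 (ℝ × EuclideanSpace ℝ (Fin (N - 1)))).measurableEmbedding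

end Frame

/-- The integral of the kernel over the hyperplane at height `t` along `e`: rescaling by `t` reduces
it to the slice at height one, which gives the constant `a₁₁(e)`. -/
lemma integral_slice {N : ℕ} (hN : 2 ≤ N) {α : ℝ} {g J : EuclideanSpace ℝ (Fin N) → ℝ}
    (hJ : ∀ z : EuclideanSpace ℝ (Fin N), z ≠ 0 →
      J z = g (‖z‖⁻¹ • z) * ‖z‖ ^ (-((N : ℝ) + α)))
    (hJe : ∀ z, J (-z) = J z)
    {e : EuclideanSpace ℝ (Fin N)} (he : ‖e‖ = 1)
    {φ : EuclideanSpace ℝ (Fin (N - 1)) →ₗᵢ[ℝ] EuclideanSpace ℝ (Fin N)}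
    (hφ : LinearMap.range φ.toLinearMap = (ℝ ∙ e)ᗮ) {t : ℝ} (ht : t ≠ 0) :
    ∫ y, J (t • e + φ y) =
      (∫ u : EuclideanSpace ℝ (Fin (N - 1)),
        g (‖e + φ u‖⁻¹ • (e + φ u)) * (1 + ‖u‖ ^ 2) ^ (-((N : ℝ) + α) / 2)) *
      |t| ^ (-(1 + α)) := by
  have hnorm : ∀ u, ‖e + φ u‖ ^ 2 = 1 + ‖u‖ ^ 2 := fun u => by
    have := norm_frame_sq he hφ 1 u
    simpa using this
  have hne : ∀ u, e + φ u ≠ 0 := fun u h => by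
    have := hnorm u
    rw [h, norm_zero] at this
    nlinarith [sq_nonneg ‖u‖]
  have hhom_pos : ∀ s : ℝ, 0 < s → ∀ z, z ≠ 0 → J (s • z) = s ^ (-((N : ℝ) + α)) * J z := by
    intro s hs z hz
    rw [hJ z hz, hJ _ (smul_ne_zero hs.ne' hz), norm_smul, Real.norm_of_nonneg hs.le,
      Real.mul_rpow hs.le (norm_nonneg _), smul_smul]
    have : (s * ‖z‖)⁻¹ * s = ‖z‖⁻¹ := by field_simp
    rw [this]; ring
  have hhom : ∀ z, z ≠ 0 → J (t • z) = |t| ^ (-((N : ℝ) + α)) * J z := by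
    intro z hz
    rcases lt_or_gt_of_ne ht with h | h
    · rw [← hJe, ← neg_smul, abs_of_neg h]
      exact hhom_pos _ (by linarith) z hz
    · rw [abs_of_pos h]
      exact hhom_pos _ h z hz
  have hone : ∀ u, J (e + φ u) =
      g (‖e + φ u‖⁻¹ • (e + φ u)) * (1 + ‖u‖ ^ 2) ^ (-((N : ℝ) + α) / 2) := by
    intro u
    rw [hJ _ (hne u), ← hnorm u, ← Real.rpow_natCast ‖e + φ u‖ 2, ← Real.rpow_mul (norm_nonneg _)]
    congr 2
    push_cast
    ring
  have hscale := Measure.integral_comp_smul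
    (volume : Measure (EuclideanSpace ℝ (Fin (N - 1)))) (fun y => J (t • e + φ y)) t
  have hl : ∀ u, J (t • e + φ (t • u)) = |t| ^ (-((N : ℝ) + α)) *
      (g (‖e + φ u‖⁻¹ • (e + φ u)) * (1 + ‖u‖ ^ 2) ^ (-((N : ℝ) + α) / 2)) := by
    intro u
    rw [map_smul, ← smul_add, hhom _ (hne u), hone]
  have ht' : 0 < |t| := abs_pos.2 ht
  simp_rw [hl] at hscale
  rw [integral_const_mul, finrank_euclideanSpace_fin, smul_eq_mul, abs_inv, abs_pow] at hscale
  have hpow : |t| ^ (N - 1) * |t| ^ (-((N : ℝ) + α)) = |t| ^ (-(1 + α)) := by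
    rw [← Real.rpow_natCast |t| (N - 1), ← Real.rpow_add ht', Nat.cast_sub (by omega)]
    congr 1
    push_cast
    ring
  rw [← hpow]
  have hp : |t| ^ (N - 1) ≠ 0 := (pow_pos ht' _).ne'
  rw [eq_inv_mul_iff_mul_eq₀ hp] at hscale
  rw [← hscale]
  ring

/-! ### The reduction formula -/

/-- **Reduction of the anisotropic fractional operator to dimension one.**
For a kernel `J z = g(z/|z|) |z|^{-(N+α)}` and a bounded `C²` profile `q`, the compensated
integral of `z ↦ q(r + e·z)` against `J` reduces to a one-dimensional fractional Laplacian
of order `α`, up to the multiplicative constant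
`a₁₁(e) = ∫_{e^⊥} g((e+u)/|e+u|) (1+|u|²)^{-(N+α)/2} du`,
where the hyperplane `e^⊥ ≅ ℝ^{N-1}` is parametrized by a linear isometry `φ`. -/
theorem stmt_0 (N : ℕ) (hN : 2 ≤ N) (α : ℝ) (hα0 : 0 < α) (hα2 : α < 2)
    (g : EuclideanSpace ℝ (Fin N) → ℝ)
    (hg_cont : ContinuousOn g (sphere (0 : EuclideanSpace ℝ (Fin N)) 1))
    (hg_pos : ∀ θ ∈ sphere (0 : EuclideanSpace ℝ (Fin N)) 1, 0 < g θ)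
    (hg_even : ∀ θ ∈ sphere (0 : EuclideanSpace ℝ (Fin N)) 1, g (-θ) = g θ)
    (J : EuclideanSpace ℝ (Fin N) → ℝ)
    (hJ : ∀ z : EuclideanSpace ℝ (Fin N), z ≠ 0 →
      J z = g (‖z‖⁻¹ • z) * ‖z‖ ^ (-((N : ℝ) + α)))
    (q : ℝ → ℝ) (hq : ContDiff ℝ 2 q)
    (hq_bdd : ∃ M, ∀ r, |q r| ≤ M)
    (hq'_bdd : ∃ M, ∀ r, |deriv q r| ≤ M)
    (hq''_bdd : ∃ M, ∀ r, |deriv (deriv q) r| ≤ M)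
    (e : EuclideanSpace ℝ (Fin N)) (he : ‖e‖ = 1)
    (φ : EuclideanSpace ℝ (Fin (N - 1)) →ₗᵢ[ℝ] EuclideanSpace ℝ (Fin N))
    (hφ : LinearMap.range φ.toLinearMap = (ℝ ∙ e)ᗮ)
    (r : ℝ) :
    Integrable (fun z : EuclideanSpace ℝ (Fin N) =>
      (q (r + ⟪e, z⟫) - q r - (if ‖z‖ ≤ 1 then deriv q r * ⟪e, z⟫ else 0)) * J z) ∧
    ∫ z : EuclideanSpace ℝ (Fin N),
        (q (r + ⟪e, z⟫) - q r - (if ‖z‖ ≤ 1 then deriv q r * ⟪e, z⟫ else 0)) * J z =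
      (∫ u : EuclideanSpace ℝ (Fin (N - 1)),
          g (‖e + φ u‖⁻¹ • (e + φ u)) * (1 + ‖u‖ ^ 2) ^ (-((N : ℝ) + α) / 2)) *
        ∫ t : ℝ, (q (r + t) - q r - (if |t| ≤ 1 then deriv q r * t else 0)) * |t| ^ (-(1 + α)) := by
  have : Nonempty (Fin N) := ⟨⟨0, by omega⟩⟩
  have hsph : ∀ z : EuclideanSpace ℝ (Fin N), z ≠ 0 → ‖z‖⁻¹ • z ∈ sphere 0 1 := by
    intro z hz
    simp [norm_smul, hz]
  -- `hJ` leaves `J 0` free, but evenness at `0` is trivial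
  have hJe : ∀ z, J (-z) = J z := by
    intro z
    by_cases hz : z = 0
    · simp [hz]
    · rw [hJ z hz, hJ _ (neg_ne_zero.2 hz), norm_neg, smul_neg, hg_even _ (hsph z hz)]
  have hJm : AEStronglyMeasurable J volume := by
    have hc : ContinuousOn J {0}ᶜ := by
      have h1 : ContinuousOn (fun z : EuclideanSpace ℝ (Fin N) =>
          g (‖z‖⁻¹ • z) * ‖z‖ ^ (-((N : ℝ) + α))) {0}ᶜ := by
        refine ContinuousOn.mul (hg_cont.comp ?_ fun z hz => hsph z hz) ?_
        · exact (continuousOn_id.norm.inv₀ fun z hz => norm_ne_zero_iff.2 hz).smul continuousOn_id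
        · exact continuousOn_id.norm.rpow_const fun z hz => Or.inl (norm_ne_zero_iff.2 hz)
      exact h1.congr fun z hz => hJ z hz
    have := hc.aestronglyMeasurable (μ := volume) (measurableSet_singleton _).compl
    rwa [restrict_compl_singleton] at this
  obtain ⟨G, hG⟩ := (isCompact_sphere (0 : EuclideanSpace ℝ (Fin N)) 1).exists_bound_of_continuousOn
    hg_cont
  let l : EuclideanSpace ℝ (Fin N) →L[ℝ] ℝ := innerSL ℝ e
  have hl : ∀ z, |l z| ≤ ‖z‖ := fun z => by
    have := abs_real_inner_le_norm e z
    rwa [he, one_mul] at this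
  have hint := integrable_compensated (μ := volume) hα0 hα2 hq hq_bdd hq''_bdd r l hl hJm (G := G)
    (fun z hz => by
      rw [hJ z hz, abs_mul, abs_of_nonneg (Real.rpow_nonneg (norm_nonneg z) _),
        finrank_euclideanSpace_fin]
      exact mul_le_mul_of_nonneg_right (hG _ (hsph z hz)) (Real.rpow_nonneg (norm_nonneg z) _))
  refine ⟨hint, ?_⟩
  have hint1 := integrable_compensated (μ := (volume : Measure ℝ)) hα0 hα2 hq hq_bdd hq''_bdd r
    (ContinuousLinearMap.id ℝ ℝ) (fun z => le_rfl) (K := fun t => |t| ^ (-(1 + α))) (G := 1)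
    (Measurable.aestronglyMeasurable (by fun_prop))
    (fun z hz => by
      rw [Module.finrank_self, one_mul, abs_of_nonneg (Real.rpow_nonneg (abs_nonneg z) _),
        Real.norm_eq_abs, Nat.cast_one])
  obtain ⟨hS, hSeq⟩ := two_mul_integral_compensated l hJe hint
  obtain ⟨-, hSeq1⟩ := two_mul_integral_compensated (ContinuousLinearMap.id ℝ ℝ)
    (fun z => by simp only [abs_neg]) hint1
  simp only [ContinuousLinearMap.id_apply, Real.norm_eq_abs] at hSeq1
  obtain ⟨hmp, hemb⟩ := frame_measurePreserving hN he hφ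
  have hlf : ∀ (t : ℝ) y, l (t • e + φ y) = t := fun t y => by
    change ⟪e, t • e + φ y⟫ = t
    rw [inner_add_right, inner_frame hφ, inner_smul_right, real_inner_self_eq_norm_sq, he]
    simp
  have hmain : ∫ z, (q (r + l z) + q (r - l z) - 2 * q r) * J z =
      (∫ u : EuclideanSpace ℝ (Fin (N - 1)),
        g (‖e + φ u‖⁻¹ • (e + φ u)) * (1 + ‖u‖ ^ 2) ^ (-((N : ℝ) + α) / 2)) *
      ∫ t : ℝ, (q (r + t) + q (r - t) - 2 * q r) * |t| ^ (-(1 + α)) := by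
    have hprod := (hmp.integrable_comp_emb hemb).2 hS
    rw [Function.comp_def] at hprod
    rw [← hmp.integral_comp hemb, Measure.volume_eq_prod, integral_prod _ hprod,
      ← integral_const_mul]
    refine integral_congr_ae ?_
    filter_upwards [Measure.ae_ne volume (0 : ℝ)] with t ht
    simp only [hlf]
    rw [integral_const_mul, integral_slice hN hJ hJe he hφ ht]
    ring
  rw [← hSeq, ← hSeq1] at hmain
  change ∫ z, (q (r + l z) - q r - (if ‖z‖ ≤ 1 then deriv q r * l z else 0)) * J z = _
  linarith
end

section
/- Let N ≥ 2, α ∈ (0,2), let g : S^{N-1} → [0,∞) be continuous and even, and let e ∈ S^{N-1} be a unit vector. Let F : ℝ → ℝ be measurable with ∫_ℝ |F(t)| |t|^{-(1+α)} dt < ∞. Then the function z ↦ F(e·z) g(z/|z|) |z|^{-(N+α)} is Lebesgue integrable on ℝ^N and ∫_{ℝ^N} F(e·z) g(z/|z|) |z|^{-(N+α)} dz = a₁₁(e) · ∫_ℝ F(t) |t|^{-(1+α)} dt. -/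
/-!
Write `k z = g (z / |z|) |z| ^ (-(N + α))`. The map `(t, u) ↦ t e + φ u` is a linear isometry of
`ℝ × ℝ^{N-1}` (with the `ℓ²` norm) onto `ℝ^N`, hence preserves Lebesgue measure, and
`⟪e, t e + φ u⟫ = t`; so the integral over `ℝ^N` is the integral of `F t * k (t e + φ u)` over the
product. Since `g` is even, `k` satisfies `k (t z) = |t| ^ (-(N + α)) k z` for `t ≠ 0`, and the
substitution `u = t v` gives
`∫ k (t e + φ u) du = |t| ^ (N - 1) ∫ k (t (e + φ v)) dv = |t| ^ (-(1 + α)) a₁₁(e)`.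
The integral `a₁₁(e)` converges because `g` is bounded on the sphere and
`(1 + |u|²) ^ (-(N + α) / 2)` is integrable on `ℝ^{N-1}`. As `k ≥ 0`, the same computation with
`|F|` in place of `F` gives integrability on the product, and Fubini gives the formula.
-/

open MeasureTheory Metric Filter
open scoped RealInnerProductSpace Topology

namespace AnisotropicKernel

variable {N : ℕ} {α : ℝ} {g : EuclideanSpace ℝ (Fin N) → ℝ} {e : EuclideanSpace ℝ (Fin N)}
  {φ : EuclideanSpace ℝ (Fin (N - 1)) →ₗᵢ[ℝ] EuclideanSpace ℝ (Fin N)}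

/-- The kernel `z ↦ g (z / |z|) |z| ^ (-(N + α))`. -/
noncomputable def kern (α : ℝ) (g : EuclideanSpace ℝ (Fin N) → ℝ)
    (z : EuclideanSpace ℝ (Fin N)) : ℝ :=
  g (‖z‖⁻¹ • z) * ‖z‖ ^ (-((N : ℝ) + α))

lemma normalize_mem {z : EuclideanSpace ℝ (Fin N)} (hz : z ≠ 0) :
    ‖z‖⁻¹ • z ∈ sphere (0 : EuclideanSpace ℝ (Fin N)) 1 := by
  simp [norm_smul, hz]

/-- Evenness of `g` makes the kernel homogeneous under negative dilations as well. -/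
lemma kern_smul
    (hg_even : ∀ θ ∈ sphere (0 : EuclideanSpace ℝ (Fin N)) 1, g (-θ) = g θ)
    {z : EuclideanSpace ℝ (Fin N)} (hz : z ≠ 0) {t : ℝ} (ht : t ≠ 0) :
    kern α g (t • z) = |t| ^ (-((N : ℝ) + α)) * kern α g z := by
  have hdir : g (‖t • z‖⁻¹ • t • z) = g (‖z‖⁻¹ • z) := by
    rcases ht.lt_or_gt with h | h
    · have : ‖t • z‖⁻¹ • t • z = -(‖z‖⁻¹ • z) := by
        rw [norm_smul, Real.norm_eq_abs, abs_of_neg h, smul_smul, ← neg_smul]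
        congr 1
        have := norm_ne_zero_iff.2 hz
        field_simp
      rw [this, hg_even _ (normalize_mem hz)]
    · congr 1
      rw [norm_smul, Real.norm_eq_abs, abs_of_pos h, smul_smul]
      congr 1
      have := norm_ne_zero_iff.2 hz
      field_simp
  rw [kern, kern, hdir, norm_smul, Real.norm_eq_abs,
    Real.mul_rpow (abs_nonneg t) (norm_nonneg z)]
  ring

lemma kern_nonneg
    (hg_nonneg : ∀ θ ∈ sphere (0 : EuclideanSpace ℝ (Fin N)) 1, 0 ≤ g θ)
    {z : EuclideanSpace ℝ (Fin N)} (hz : z ≠ 0) : 0 ≤ kern α g z :=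
  mul_nonneg (hg_nonneg _ (normalize_mem hz)) (Real.rpow_nonneg (norm_nonneg z) _)

lemma kern_continuousOn
    (hg_cont : ContinuousOn g (sphere (0 : EuclideanSpace ℝ (Fin N)) 1)) :
    ContinuousOn (kern α g) {0}ᶜ := by
  have hn : ContinuousOn (fun z : EuclideanSpace ℝ (Fin N) => ‖z‖) {0}ᶜ :=
    continuous_norm.continuousOn
  refine ContinuousOn.mul (hg_cont.comp ?_ fun z hz => normalize_mem hz) ?_
  · exact (hn.inv₀ fun z hz => norm_ne_zero_iff.2 hz).smul continuousOn_id
  · exact hn.rpow_const fun z hz => Or.inl (norm_ne_zero_iff.2 hz)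

lemma kern_aestronglyMeasurable (hN : 2 ≤ N)
    (hg_cont : ContinuousOn g (sphere (0 : EuclideanSpace ℝ (Fin N)) 1)) :
    AEStronglyMeasurable (kern α g) := by
  have : Nonempty (Fin N) := ⟨⟨0, by omega⟩⟩
  have h := (kern_continuousOn (α := α) hg_cont).aestronglyMeasurable
    (μ := volume) (measurableSet_singleton 0).compl
  rwa [Measure.restrict_eq_self_of_ae_mem (s := {0}ᶜ) (Measure.ae_ne volume 0)] at h

lemma inner_phi (hφ : LinearMap.range φ.toLinearMap = (ℝ ∙ e)ᗮ)
    (u : EuclideanSpace ℝ (Fin (N - 1))) : ⟪e, φ u⟫ = 0 := by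
  have h : φ u ∈ (ℝ ∙ e)ᗮ := hφ ▸ LinearMap.mem_range_self φ.toLinearMap u
  exact Submodule.mem_orthogonal_singleton_iff_inner_right.1 h

lemma norm_sq_add (he : ‖e‖ = 1) (hφ : LinearMap.range φ.toLinearMap = (ℝ ∙ e)ᗮ)
    (t : ℝ) (u : EuclideanSpace ℝ (Fin (N - 1))) :
    ‖t • e + φ u‖ ^ 2 = t ^ 2 + ‖u‖ ^ 2 := by
  rw [norm_add_sq_real, inner_smul_left, inner_phi hφ, norm_smul, he, φ.norm_map]
  simp

lemma add_ne_zero (he : ‖e‖ = 1) (hφ : LinearMap.range φ.toLinearMap = (ℝ ∙ e)ᗮ)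
    {t : ℝ} (ht : t ≠ 0) (u : EuclideanSpace ℝ (Fin (N - 1))) : t • e + φ u ≠ 0 := by
  intro h
  have := norm_sq_add he hφ t u
  rw [h, norm_zero] at this
  have : 0 < t ^ 2 := by positivity
  nlinarith [sq_nonneg ‖u‖]

/-- The orthogonal coordinates `(t, u) ↦ t e + φ u` preserve Lebesgue measure; the measurable
embedding property is what transfers integrals of arbitrary functions. -/
lemma coord_measurePreserving (hN : 2 ≤ N) (he : ‖e‖ = 1)
    (hφ : LinearMap.range φ.toLinearMap = (ℝ ∙ e)ᗮ) :
    MeasurePreserving (fun p : ℝ × EuclideanSpace ℝ (Fin (N - 1)) => p.1 • e + φ p.2) ∧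
    MeasurableEmbedding (fun p : ℝ × EuclideanSpace ℝ (Fin (N - 1)) => p.1 • e + φ p.2) := by
  let L : WithLp 2 (ℝ × EuclideanSpace ℝ (Fin (N - 1))) →ₗᵢ[ℝ] EuclideanSpace ℝ (Fin N) :=
    { toFun := fun p => p.fst • e + φ p.snd
      map_add' := fun p q => by
        simp only [WithLp.add_fst, WithLp.add_snd, map_add, add_smul]; abel
      map_smul' := fun c p => by
        simp [smul_smul]
      norm_map' := fun p => by
        have h1 := norm_sq_add he hφ p.fst p.snd
        have h2 := WithLp.prod_norm_sq_eq_of_L2 p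
        rw [Real.norm_eq_abs, sq_abs, ← h1] at h2
        exact ((sq_eq_sq₀ (norm_nonneg _) (norm_nonneg _)).1 h2).symm }
  have hdim : Module.finrank ℝ (WithLp 2 (ℝ × EuclideanSpace ℝ (Fin (N - 1)))) =
      Module.finrank ℝ (EuclideanSpace ℝ (Fin N)) := by
    rw [(WithLp.linearEquiv 2 ℝ (ℝ × EuclideanSpace ℝ (Fin (N - 1)))).finrank_eq,
      Module.finrank_prod]
    simp
    omega
  let Λ := L.toLinearIsometryEquiv hdim
  have h1 := WithLp.volume_preserving_toLp ℝ (EuclideanSpace ℝ (Fin (N - 1)))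
  refine ⟨(Λ.measurePreserving).comp h1, ?_⟩
  exact Λ.toHomeomorph.measurableEmbedding.comp
    (MeasurableEquiv.toLp 2 (ℝ × EuclideanSpace ℝ (Fin (N - 1)))).measurableEmbedding

lemma kern_base (he : ‖e‖ = 1) (hφ : LinearMap.range φ.toLinearMap = (ℝ ∙ e)ᗮ)
    (u : EuclideanSpace ℝ (Fin (N - 1))) :
    kern α g (e + φ u) =
      g (‖e + φ u‖⁻¹ • (e + φ u)) * (1 + ‖u‖ ^ 2) ^ (-((N : ℝ) + α) / 2) := by
  have h := norm_sq_add he hφ 1 u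
  rw [one_smul, one_pow] at h
  rw [kern, ← h, ← Real.rpow_natCast, ← Real.rpow_mul (norm_nonneg _)]
  congr 2
  push_cast
  ring

lemma kern_base_integrable (hα0 : 0 < α)
    (hg_cont : ContinuousOn g (sphere (0 : EuclideanSpace ℝ (Fin N)) 1))
    (he : ‖e‖ = 1) (hφ : LinearMap.range φ.toLinearMap = (ℝ ∙ e)ᗮ) :
    Integrable (fun u => kern α g (e + φ u)) := by
  have hne : ∀ u, e + φ u ≠ 0 := fun u => by
    simpa using add_ne_zero he hφ one_ne_zero u
  obtain ⟨C, hC⟩ := (isCompact_sphere (0 : EuclideanSpace ℝ (Fin N)) 1).exists_bound_of_continuousOn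
    hg_cont
  have hint : Integrable (fun u : EuclideanSpace ℝ (Fin (N - 1)) =>
      (1 + ‖u‖ ^ 2) ^ (-((N : ℝ) + α) / 2)) := by
    apply integrable_rpow_neg_one_add_norm_sq
    have : ((N - 1 : ℕ) : ℝ) ≤ N := by exact_mod_cast Nat.sub_le N 1
    rw [finrank_euclideanSpace_fin]
    linarith
  refine (hint.const_mul C).mono' ?_ (Eventually.of_forall fun u => ?_)
  · apply Continuous.aestronglyMeasurable
    exact (kern_continuousOn hg_cont).comp_continuous
      (continuous_const.add φ.continuous) hne
  · have hpos : (0 : ℝ) ≤ (1 + ‖u‖ ^ 2) ^ (-((N : ℝ) + α) / 2) := by positivity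
    rw [kern_base he hφ, norm_mul, Real.norm_of_nonneg hpos]
    exact mul_le_mul_of_nonneg_right (hC _ (normalize_mem (hne u))) hpos

/-- The kernel on the slice at height `t`, read in the rescaled variable `u = t v`. -/
lemma kern_slice
    (hg_even : ∀ θ ∈ sphere (0 : EuclideanSpace ℝ (Fin N)) 1, g (-θ) = g θ)
    (he : ‖e‖ = 1) (hφ : LinearMap.range φ.toLinearMap = (ℝ ∙ e)ᗮ) {t : ℝ} (ht : t ≠ 0)
    (v : EuclideanSpace ℝ (Fin (N - 1))) :
    kern α g (t • e + φ (t • v)) = |t| ^ (-((N : ℝ) + α)) * kern α g (e + φ v) := by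
  rw [map_smul, ← smul_add, kern_smul hg_even _ ht]
  simpa using add_ne_zero he hφ one_ne_zero v

lemma kern_slice_integrable (hα0 : 0 < α)
    (hg_cont : ContinuousOn g (sphere (0 : EuclideanSpace ℝ (Fin N)) 1))
    (hg_even : ∀ θ ∈ sphere (0 : EuclideanSpace ℝ (Fin N)) 1, g (-θ) = g θ)
    (he : ‖e‖ = 1) (hφ : LinearMap.range φ.toLinearMap = (ℝ ∙ e)ᗮ) {t : ℝ} (ht : t ≠ 0) :
    Integrable (fun u => kern α g (t • e + φ u)) := by
  rw [← integrable_comp_smul_iff volume (fun u => kern α g (t • e + φ u)) ht]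
  simp only [kern_slice hg_even he hφ ht]
  exact (kern_base_integrable hα0 hg_cont he hφ).const_mul _

lemma kern_slice_integral (hN : 2 ≤ N)
    (hg_even : ∀ θ ∈ sphere (0 : EuclideanSpace ℝ (Fin N)) 1, g (-θ) = g θ)
    (he : ‖e‖ = 1) (hφ : LinearMap.range φ.toLinearMap = (ℝ ∙ e)ᗮ) {t : ℝ} (ht : t ≠ 0) :
    ∫ u, kern α g (t • e + φ u) = |t| ^ (-(1 + α)) * ∫ u, kern α g (e + φ u) := by
  have h := Measure.integral_comp_smul volume (fun u => kern α g (t • e + φ u)) t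
  simp only [kern_slice hg_even he hφ ht] at h
  rw [integral_const_mul, finrank_euclideanSpace_fin, abs_inv, abs_pow, smul_eq_mul] at h
  have ht' : 0 < |t| := abs_pos.2 ht
  have hp : |t| ^ (N - 1) ≠ 0 := by positivity
  rw [eq_inv_mul_iff_mul_eq₀ hp, ← mul_assoc] at h
  rw [← h, ← Real.rpow_natCast, ← Real.rpow_add ht', Nat.cast_sub (by omega)]
  congr 2
  push_cast
  ring

end AnisotropicKernel

open AnisotropicKernel in
/-- **Fubini-type reduction of the anisotropic kernel.**
For `F` with `∫ |F(t)| |t|^{-(1+α)} dt < ∞`, the integral of `z ↦ F(e·z) g(z/|z|) |z|^{-(N+α)}`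
over `ℝ^N` equals `a₁₁(e) ∫ F(t) |t|^{-(1+α)} dt`, where
`a₁₁(e) = ∫_{e^⊥} g((e+u)/|e+u|) (1+|u|²)^{-(N+α)/2} du`, the hyperplane `e^⊥ ≅ ℝ^{N-1}`
being parametrized by a linear isometry `φ`. -/
theorem stmt_1 (N : ℕ) (hN : 2 ≤ N) (α : ℝ) (hα0 : 0 < α) (hα2 : α < 2)
    (g : EuclideanSpace ℝ (Fin N) → ℝ)
    (hg_cont : ContinuousOn g (sphere (0 : EuclideanSpace ℝ (Fin N)) 1))
    (hg_nonneg : ∀ θ ∈ sphere (0 : EuclideanSpace ℝ (Fin N)) 1, 0 ≤ g θ)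
    (hg_even : ∀ θ ∈ sphere (0 : EuclideanSpace ℝ (Fin N)) 1, g (-θ) = g θ)
    (e : EuclideanSpace ℝ (Fin N)) (he : ‖e‖ = 1)
    (F : ℝ → ℝ) (hF_meas : Measurable F)
    (hF_int : Integrable (fun t : ℝ => |F t| * |t| ^ (-(1 + α))))
    (φ : EuclideanSpace ℝ (Fin (N - 1)) →ₗᵢ[ℝ] EuclideanSpace ℝ (Fin N))
    (hφ : LinearMap.range φ.toLinearMap = (ℝ ∙ e)ᗮ) :
    Integrable (fun z : EuclideanSpace ℝ (Fin N) =>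
      F ⟪e, z⟫ * (g (‖z‖⁻¹ • z) * ‖z‖ ^ (-((N : ℝ) + α)))) ∧
    ∫ z : EuclideanSpace ℝ (Fin N),
        F ⟪e, z⟫ * (g (‖z‖⁻¹ • z) * ‖z‖ ^ (-((N : ℝ) + α))) =
      (∫ u : EuclideanSpace ℝ (Fin (N - 1)),
          g (‖e + φ u‖⁻¹ • (e + φ u)) * (1 + ‖u‖ ^ 2) ^ (-((N : ℝ) + α) / 2)) *
        ∫ t : ℝ, F t * |t| ^ (-(1 + α)) := by

  obtain ⟨hmp, hemb⟩ := coord_measurePreserving hN he hφ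
  change Integrable (fun z => F ⟪e, z⟫ * kern α g z) ∧
    ∫ z, F ⟪e, z⟫ * kern α g z = _
  have hH : ∀ p : ℝ × EuclideanSpace ℝ (Fin (N - 1)),
      F ⟪e, p.1 • e + φ p.2⟫ * kern α g (p.1 • e + φ p.2) =
        F p.1 * kern α g (p.1 • e + φ p.2) := fun p => by
    rw [inner_add_right, inner_smul_right, inner_phi hφ, real_inner_self_eq_norm_sq, he]
    simp
  have hne : ∀ᵐ t : ℝ, t ≠ 0 := Measure.ae_ne volume 0
  have hprod : Integrable (fun p : ℝ × EuclideanSpace ℝ (Fin (N - 1)) =>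
      F p.1 * kern α g (p.1 • e + φ p.2)) (volume.prod volume) := by
    rw [integrable_prod_iff]
    · constructor
      · filter_upwards [hne] with t ht
        exact (kern_slice_integrable hα0 hg_cont hg_even he hφ ht).const_mul _
      · refine (hF_int.mul_const (∫ u, kern α g (e + φ u))).congr ?_
        filter_upwards [hne] with t ht
        have : ∀ u, ‖F t * kern α g (t • e + φ u)‖ = |F t| * kern α g (t • e + φ u) := fun u => by
          rw [norm_mul, Real.norm_eq_abs,
            Real.norm_of_nonneg (kern_nonneg hg_nonneg (add_ne_zero he hφ ht u))]
        simp only [this]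
        rw [integral_const_mul, kern_slice_integral hN hg_even he hφ ht, mul_assoc]
    · exact (hF_meas.comp measurable_fst).aestronglyMeasurable.mul
        ((kern_aestronglyMeasurable hN hg_cont).comp_measurePreserving hmp)
  constructor
  · rw [← hmp.integrable_comp_emb hemb]
    exact hprod.congr (Eventually.of_forall fun p => (hH p).symm)
  · rw [← hmp.integral_comp hemb]
    simp only [hH, ← kern_base he hφ]
    rw [Measure.volume_eq_prod, integral_prod _ hprod, mul_comm, ← integral_mul_const]
    refine integral_congr_ae ?_
    filter_upwards [hne] with t ht
    rw [integral_const_mul, kern_slice_integral hN hg_even he hφ ht, mul_assoc]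
end

section
/- Let m₋ < m₊ be real numbers and let f : ℝ → ℝ be C¹ with f'(m₋) > 0 and f'(m₊) > 0. Let q : ℝ → ℝ be C¹ with q'(r) > 0 for all r, m₋ < q(r) < m₊ for all r, q(r) → m₋ as r → −∞ and q(r) → m₊ as r → +∞. Then there exists a constant C > 0 such that q'(r) + C f'(q(r)) ≥ 0 for all r ∈ ℝ. -/
/-!
Since `f'` is continuous and positive at `mminus` and `mplus`, `f' ∘ q` is positive outside some
compact interval `[a, b]`, where the claim holds for every `C > 0`. On `[a, b]` the continuous
quotient `f'(q) / q'` is bounded in absolute value by some `M`, and `C = 1 / (|M| + 1)` works.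
-/

open Filter
open scoped Topology

/-- **Pointwise lower bound `q' + C f'(q) ≥ 0` for monotone waves of bistable equations.**
If `f` is `C¹` with `f'(mminus) > 0` and `f'(mplus) > 0`, and `q` is `C¹` with `q' > 0`,
`mminus < q < mplus`, and limits `mminus` at `−∞`, `mplus` at `+∞`, then there is `C > 0`
with `q'(r) + C f'(q(r)) ≥ 0` for all `r`. -/
theorem stmt_8 (mminus mplus : ℝ) (hm : mminus < mplus)
    (f : ℝ → ℝ) (hf : ContDiff ℝ 1 f)
    (hf'minus : 0 < deriv f mminus) (hf'plus : 0 < deriv f mplus)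
    (q : ℝ → ℝ) (hq : ContDiff ℝ 1 q)
    (hq' : ∀ r, 0 < deriv q r)
    (hql : ∀ r, mminus < q r) (hqu : ∀ r, q r < mplus)
    (hbot : Tendsto q atBot (𝓝 mminus)) (htop : Tendsto q atTop (𝓝 mplus)) :
    ∃ C : ℝ, 0 < C ∧ ∀ r : ℝ, 0 ≤ deriv q r + C * deriv f (q r) := by
  have hf' : Continuous (deriv f) := hf.continuous_deriv le_rfl
  have hq'c : Continuous (deriv q) := hq.continuous_deriv le_rfl
  obtain ⟨a, ha⟩ := eventually_atBot.1
    (((hf'.tendsto mminus).comp hbot).eventually_const_lt hf'minus)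
  obtain ⟨b, hb⟩ := eventually_atTop.1
    (((hf'.tendsto mplus).comp htop).eventually_const_lt hf'plus)
  have hcont : Continuous fun r => deriv f (q r) / deriv q r :=
    (hf'.comp hq.continuous).div hq'c fun r => (hq' r).ne'
  obtain ⟨M, hM⟩ := (isCompact_Icc (a := a) (b := b)).exists_bound_of_continuousOn
    hcont.continuousOn
  have hpos : 0 < |M| + 1 := by positivity
  refine ⟨1 / (|M| + 1), by positivity, fun r => ?_⟩
  rcases le_or_gt 0 (deriv f (q r)) with h | h
  · have := hq' r
    positivity
  · have har : a ≤ r := by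
      by_contra! hlt
      exact absurd (ha r hlt.le) (not_lt.2 h.le)
    have hrb : r ≤ b := by
      by_contra! hlt
      exact absurd (hb r hlt.le) (not_lt.2 h.le)
    have h1 := hM r ⟨har, hrb⟩
    rw [Real.norm_eq_abs, abs_div, abs_of_pos (hq' r), div_le_iff₀ (hq' r)] at h1
    have h2 : -deriv f (q r) ≤ (|M| + 1) * deriv q r := by
      nlinarith [neg_le_abs (deriv f (q r)), le_abs_self M, hq' r]
    have h3 : -deriv f (q r) / (|M| + 1) ≤ deriv q r := by
      rwa [div_le_iff₀' hpos]
    have h4 : 1 / (|M| + 1) * deriv f (q r) = -(-deriv f (q r) / (|M| + 1)) := by ring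
    linarith
end

section
/- Let N ≥ 1, let J : ℝ^N → [0,∞) be continuous with compact support, let q : ℝ → ℝ be C¹, nondecreasing and bounded, with q' bounded and integrable on ℝ, and let d : ℝ^N → ℝ be C² with bounded second derivative. Fix x ∈ ℝ^N and for ε > 0 set W_ε(z) = ( d(x+εz) − d(x) − ε Dd(x)·z ) / ε². Then, as ε → 0⁺, (1/ε) ∫_{ℝ^N} ∫_ℝ q'(ξ) [ q( ξ + Dd(x)·z + ε W_ε(z) ) − q( ξ + Dd(x)·z ) ] dξ J(z) dz converges to (1/2) ∫_{ℝ^N} ∫_ℝ q'(ξ) q'( ξ + Dd(x)·z ) ( D²d(x) z · z ) dξ J(z) dz. -/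
open MeasureTheory Metric Filter
open scoped Topology

/-!
Dominated convergence, applied first in `ξ` and then in `z`. By Taylor's formula with Lagrange
remainder (`exists_remainder_eq`), `W_ε(z)` is half the Hessian form of `d` at a point of the
segment from `x` to `x + ε z`. Hence `|W_ε(z)| ≤ K ‖z‖²` for all `ε > 0`, and
`W_ε(z) → D²d(x)z·z / 2`. The difference quotient
`(q(b + ε W_ε(z)) − q(b)) / ε` then converges to `q'(b) D²d(x)z·z / 2` (`tendsto_quotient`) and is
bounded by `M K ‖z‖²`, where `|q'| ≤ M` (`abs_quotient_le`). The dominating functions are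
`|q'(ξ)| M K ‖z‖²` in `ξ`, and `‖q'‖₁ M K ‖z‖² J(z)` in `z`, the latter being continuous with
compact support.
-/

/-- Second-order Taylor formula with Lagrange remainder along the ray `t ↦ x + t • z`: the
rescaled remainder `W_ε(z)` is half the Hessian form at an intermediate point. -/
lemma exists_remainder_eq {E : Type*} [NormedAddCommGroup E] [NormedSpace ℝ E]
    {d : E → ℝ} (hd : ContDiff ℝ 2 d) (x z : E) {ε : ℝ} (hε : 0 < ε) :
    ∃ c ∈ Set.Ioo 0 ε, (d (x + ε • z) - d x - ε * fderiv ℝ d x z) / ε ^ 2 =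
      fderiv ℝ (fderiv ℝ d) (x + c • z) z z / 2 := by
  have hray : ∀ t : ℝ, HasDerivAt (fun t : ℝ => x + t • z) z t := fun t => by
    simpa using ((hasDerivAt_id t).smul_const z).const_add x
  have h1 : ∀ t : ℝ, HasDerivAt (fun t : ℝ => d (x + t • z)) (fderiv ℝ d (x + t • z) z) t :=
    fun t => ((hd.differentiable (by norm_num)) _).hasFDerivAt.comp_hasDerivAt t (hray t)
  have hd' : Differentiable ℝ (fderiv ℝ d) :=
    (hd.fderiv_right (m := 1) (by norm_num)).differentiable (by norm_num)
  have h2 : ∀ t : ℝ, HasDerivAt (fun t : ℝ => fderiv ℝ d (x + t • z) z)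
      (fderiv ℝ (fderiv ℝ d) (x + t • z) z z) t := fun t => by
    have h : HasDerivAt (fun t : ℝ => fderiv ℝ d (x + t • z))
        (fderiv ℝ (fderiv ℝ d) (x + t • z) z) t :=
      (hd' (x + t • z)).hasFDerivAt.comp_hasDerivAt t (hray t)
    exact (ContinuousLinearMap.apply ℝ ℝ z).hasFDerivAt.comp_hasDerivAt t h
  have h3 : ∀ t : ℝ, HasDerivAt (fun t : ℝ => d (x + t • z) - t * fderiv ℝ d x z)
      (fderiv ℝ d (x + t • z) z - fderiv ℝ d x z) t := fun t => by
    have h : HasDerivAt (fun t : ℝ => t * fderiv ℝ d x z) (fderiv ℝ d x z) t := by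
      simpa using (hasDerivAt_id t).mul_const (fderiv ℝ d x z)
    exact (h1 t).sub h
  have h4 : ∀ t : ℝ, HasDerivAt (fun t : ℝ => t ^ 2) (2 * t) t := fun t => by
    simpa using hasDerivAt_pow 2 t
  -- Cauchy's mean value theorem against `t ^ 2`, then the mean value theorem for the derivative.
  obtain ⟨b, hb, hb'⟩ := exists_ratio_hasDerivAt_eq_ratio_slope
    (fun t : ℝ => d (x + t • z) - t * fderiv ℝ d x z)
    (fun t => fderiv ℝ d (x + t • z) z - fderiv ℝ d x z) hε
    (fun t _ => (h3 t).continuousAt.continuousWithinAt) (fun t _ => h3 t)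
    (fun t : ℝ => t ^ 2) (fun t => 2 * t)
    (fun t _ => (h4 t).continuousAt.continuousWithinAt) (fun t _ => h4 t)
  obtain ⟨c, hc, hc'⟩ := exists_hasDerivAt_eq_slope
    (fun t : ℝ => fderiv ℝ d (x + t • z) z)
    (fun t => fderiv ℝ (fderiv ℝ d) (x + t • z) z z) hb.1
    (fun t _ => (h2 t).continuousAt.continuousWithinAt) (fun t _ => h2 t)
  have hb0 := hb.1
  refine ⟨c, ⟨hc.1, hc.2.trans hb.2⟩, ?_⟩
  simp only [zero_smul, add_zero, zero_mul, sub_zero] at hb' hc'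
  rw [hc']
  field_simp
  simp only [ne_eq, OfNat.ofNat_ne_zero, not_false_eq_true, zero_pow, sub_zero] at hb'
  linarith

lemma abs_hessian_le {E : Type*} [NormedAddCommGroup E] [NormedSpace ℝ E]
    {d : E → ℝ} {K : ℝ} (hK : ∀ y, ‖iteratedFDeriv ℝ 2 d y‖ ≤ K) (y z : E) :
    |fderiv ℝ (fderiv ℝ d) y z z| ≤ K * ‖z‖ ^ 2 := by
  have h := (iteratedFDeriv ℝ 2 d y).le_opNorm ![z, z]
  rw [iteratedFDeriv_two_apply] at h
  simp only [Matrix.cons_val_zero, Matrix.cons_val_one, Fin.prod_univ_two, Real.norm_eq_abs] at h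
  refine h.trans ?_
  rw [← sq]
  gcongr
  exact hK y

lemma tendsto_remainder {E : Type*} [NormedAddCommGroup E] [NormedSpace ℝ E]
    {d : E → ℝ} (hd : ContDiff ℝ 2 d) (x z : E) :
    Tendsto (fun ε : ℝ => (d (x + ε • z) - d x - ε * fderiv ℝ d x z) / ε ^ 2) (𝓝[>] 0)
      (𝓝 (fderiv ℝ (fderiv ℝ d) x z z / 2)) := by
  have hcont : Continuous (fun t : ℝ => fderiv ℝ (fderiv ℝ d) (x + t • z) z z / 2) := by
    have : Continuous (fderiv ℝ (fderiv ℝ d)) :=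
      (hd.fderiv_right (m := 1) (by norm_num)).continuous_fderiv (by norm_num)
    fun_prop
  choose! c hc hc' using fun (ε : ℝ) (hε : 0 < ε) => exists_remainder_eq hd x z hε
  have hc0 : Tendsto c (𝓝[>] 0) (𝓝 0) := by
    refine tendsto_of_tendsto_of_tendsto_of_le_of_le' tendsto_const_nhds
      (tendsto_id.mono_left nhdsWithin_le_nhds) ?_ ?_
    · filter_upwards [self_mem_nhdsWithin] with ε hε using (hc ε hε).1.le
    · filter_upwards [self_mem_nhdsWithin] with ε hε using (hc ε hε).2.le
  have := (hcont.tendsto 0).comp hc0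
  simp only [zero_smul, add_zero] at this
  refine this.congr' ?_
  filter_upwards [self_mem_nhdsWithin] with ε hε using (hc' ε hε).symm

/-- Chain rule at `0⁺` in difference-quotient form, for an increment `ε * w ε` with `w ε → l`. -/
lemma tendsto_quotient {q : ℝ → ℝ} (hq : Differentiable ℝ q) (b : ℝ) {w : ℝ → ℝ} {l : ℝ}
    (hw : Tendsto w (𝓝[>] 0) (𝓝 l)) :
    Tendsto (fun ε => (1 / ε) * (q (b + ε * w ε) - q b)) (𝓝[>] 0) (𝓝 (deriv q b * l)) := by
  have hg : HasDerivWithinAt (fun ε => b + ε * w ε) l (Set.Ioi 0) 0 := by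
    rw [hasDerivWithinAt_iff_tendsto_slope' (by simp)]
    refine hw.congr' ?_
    filter_upwards [self_mem_nhdsWithin] with ε (hε : 0 < ε)
    simp [slope_def_field, hε.ne']
  have hqb : HasDerivAt q (deriv q b) (b + 0 * w 0) := by simpa using (hq b).hasDerivAt
  have := hqb.comp_hasDerivWithinAt (0 : ℝ) hg
  rw [hasDerivWithinAt_iff_tendsto_slope' (by simp)] at this
  refine this.congr' ?_
  filter_upwards [self_mem_nhdsWithin] with ε (hε : 0 < ε)
  simp [slope_def_field, div_eq_inv_mul]

lemma abs_quotient_le {q : ℝ → ℝ} (hq : Differentiable ℝ q) {M : ℝ}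
    (hM : ∀ ξ, |deriv q ξ| ≤ M) (b w : ℝ) {B : ℝ} (hw : |w| ≤ B) {ε : ℝ} (hε : 0 < ε) :
    |(1 / ε) * (q (b + ε * w) - q b)| ≤ M * B := by
  have hM0 : 0 ≤ M := (abs_nonneg _).trans (hM 0)
  have h : |q (b + ε * w) - q b| ≤ M * |b + ε * w - b| := by
    simpa using Convex.norm_image_sub_le_of_norm_deriv_le (s := Set.univ)
      (fun y _ => hq y) (fun y _ => hM y) convex_univ (Set.mem_univ b) (Set.mem_univ (b + ε * w))
  rw [add_sub_cancel_left, abs_mul, abs_of_pos hε] at h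
  rw [abs_mul, abs_of_pos (by positivity : 0 < 1 / ε), one_div, inv_mul_le_iff₀ hε]
  calc _ ≤ M * (ε * |w|) := h
    _ ≤ M * (ε * B) := by gcongr
    _ = _ := by ring

/-- **Convergence of the averaged oscillating coefficient: regular kernel case.**
For a continuous compactly supported kernel `J ≥ 0`, a `C¹` nondecreasing bounded profile `q`
with bounded integrable slope, and a `C²` phase `d` with bounded Hessian, setting
`W_ε(z) = (d(x+εz) − d(x) − ε Dd(x)·z)/ε²`, as `ε → 0⁺`,
`(1/ε) ∫∫ q'(ξ) [q(ξ + Dd(x)·z + εW_ε(z)) − q(ξ + Dd(x)·z)] dξ J(z) dz` converges to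
`(1/2) ∫∫ q'(ξ) q'(ξ + Dd(x)·z) (D²d(x)z·z) dξ J(z) dz`. -/
theorem stmt_14 (N : ℕ) (hN : 1 ≤ N)
    (J : EuclideanSpace ℝ (Fin N) → ℝ) (hJ_cont : Continuous J)
    (hJ_supp : HasCompactSupport J) (hJ_nonneg : ∀ z, 0 ≤ J z)
    (q : ℝ → ℝ) (hq : ContDiff ℝ 1 q) (hq_mono : Monotone q)
    (hq_bdd : ∃ M, ∀ ξ, |q ξ| ≤ M)
    (hq'_bdd : ∃ M, ∀ ξ, |deriv q ξ| ≤ M) (hq'_int : Integrable (deriv q))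
    (d : EuclideanSpace ℝ (Fin N) → ℝ) (hd : ContDiff ℝ 2 d)
    (hd2 : ∃ K, ∀ y, ‖iteratedFDeriv ℝ 2 d y‖ ≤ K)
    (x : EuclideanSpace ℝ (Fin N)) :
    Tendsto (fun ε : ℝ =>
        (1 / ε) * ∫ z : EuclideanSpace ℝ (Fin N),
          (∫ ξ : ℝ, deriv q ξ *
            (q (ξ + fderiv ℝ d x z +
                ε * ((d (x + ε • z) - d x - ε * fderiv ℝ d x z) / ε ^ 2)) -
              q (ξ + fderiv ℝ d x z))) * J z)
      (𝓝[>] (0 : ℝ))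
      (𝓝 ((1 / 2) * ∫ z : EuclideanSpace ℝ (Fin N),
        (∫ ξ : ℝ, deriv q ξ * deriv q (ξ + fderiv ℝ d x z)) *
          (fderiv ℝ (fderiv ℝ d) x z z) * J z)) := by
  obtain ⟨M, hM⟩ := hq'_bdd
  obtain ⟨K, hK⟩ := hd2
  have hqd : Differentiable ℝ q := hq.differentiable (by norm_num)
  have hq'c : Continuous (deriv q) := hq.continuous_deriv (by norm_num)
  have hM0 : 0 ≤ M := (abs_nonneg _).trans (hM 0)
  have hqc : Continuous q := hq.continuous
  have hdc : Continuous d := hd.continuous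
  set W : ℝ → EuclideanSpace ℝ (Fin N) → ℝ := fun ε z =>
    (d (x + ε • z) - d x - ε * fderiv ℝ d x z) / ε ^ 2 with hW
  have hWb : ∀ ε, 0 < ε → ∀ z, |W ε z| ≤ K * ‖z‖ ^ 2 := by
    intro ε hε z
    obtain ⟨c, -, hc⟩ := exists_remainder_eq hd x z hε
    have hb := abs_hessian_le hK (x + c • z) z
    simp only [hW]
    rw [hc, abs_div, abs_two]
    linarith [abs_nonneg (fderiv ℝ (fderiv ℝ d) (x + c • z) z z)]
  have hpt : ∀ ε, 0 < ε → ∀ z ξ, ‖deriv q ξ * ((1 / ε) *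
      (q (ξ + fderiv ℝ d x z + ε * W ε z) - q (ξ + fderiv ℝ d x z)))‖ ≤
      |deriv q ξ| * (M * (K * ‖z‖ ^ 2)) := by
    intro ε hε z ξ
    rw [norm_mul, Real.norm_eq_abs, Real.norm_eq_abs]
    gcongr
    exact abs_quotient_le hqd hM _ _ (hWb ε hε z) hε
  have hinner : ∀ z, Tendsto (fun ε => ∫ ξ, deriv q ξ * ((1 / ε) *
      (q (ξ + fderiv ℝ d x z + ε * W ε z) - q (ξ + fderiv ℝ d x z)))) (𝓝[>] 0)
      (𝓝 (∫ ξ, deriv q ξ * (deriv q (ξ + fderiv ℝ d x z) *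
        (fderiv ℝ (fderiv ℝ d) x z z / 2)))) := by
    intro z
    refine tendsto_integral_filter_of_dominated_convergence
      (fun ξ => |deriv q ξ| * (M * (K * ‖z‖ ^ 2))) ?_ ?_ (hq'_int.abs.mul_const _) ?_
    · refine Eventually.of_forall fun ε => Continuous.aestronglyMeasurable ?_
      fun_prop
    · filter_upwards [self_mem_nhdsWithin] with ε hε
      exact Eventually.of_forall fun ξ => hpt ε hε z ξ
    · exact Eventually.of_forall fun ξ =>
        (tendsto_quotient hqd _ (tendsto_remainder hd x z)).const_mul _
  have houter : Tendsto (fun ε => ∫ z, (∫ ξ, deriv q ξ * ((1 / ε) *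
      (q (ξ + fderiv ℝ d x z + ε * W ε z) - q (ξ + fderiv ℝ d x z)))) * J z) (𝓝[>] 0)
      (𝓝 (∫ z, (∫ ξ, deriv q ξ * (deriv q (ξ + fderiv ℝ d x z) *
        (fderiv ℝ (fderiv ℝ d) x z z / 2))) * J z)) := by
    refine tendsto_integral_filter_of_dominated_convergence
      (fun z => ((∫ ξ, |deriv q ξ|) * (M * (K * ‖z‖ ^ 2))) * J z) ?_ ?_ ?_ ?_
    · refine Eventually.of_forall fun ε => ?_
      refine AEStronglyMeasurable.mul ?_ hJ_cont.aestronglyMeasurable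
      refine (StronglyMeasurable.integral_prod_right (ν := (volume : Measure ℝ))
        (f := fun z ξ => deriv q ξ * ((1 / ε) *
          (q (ξ + fderiv ℝ d x z + ε * W ε z) - q (ξ + fderiv ℝ d x z))))
        (Continuous.stronglyMeasurable ?_)).aestronglyMeasurable
      simp only [hW, Function.uncurry_def]
      fun_prop
    · filter_upwards [self_mem_nhdsWithin] with ε hε
      refine Eventually.of_forall fun z => ?_
      rw [norm_mul, Real.norm_of_nonneg (hJ_nonneg z), ← integral_mul_const]
      refine mul_le_mul_of_nonneg_right ?_ (hJ_nonneg z)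
      exact norm_integral_le_of_norm_le (hq'_int.abs.mul_const _)
        (Eventually.of_forall fun ξ => hpt ε hε z ξ)
    · refine Continuous.integrable_of_hasCompactSupport ?_ hJ_supp.mul_left
      fun_prop
    · exact Eventually.of_forall fun z => (hinner z).mul_const _
  have hlim : (1 / 2) * ∫ z : EuclideanSpace ℝ (Fin N),
        (∫ ξ : ℝ, deriv q ξ * deriv q (ξ + fderiv ℝ d x z)) *
          (fderiv ℝ (fderiv ℝ d) x z z) * J z =
      ∫ z, (∫ ξ, deriv q ξ * (deriv q (ξ + fderiv ℝ d x z) *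
        (fderiv ℝ (fderiv ℝ d) x z z / 2))) * J z := by
    rw [← integral_const_mul]
    congr 1 with z
    simp only [← mul_assoc, integral_mul_const]
    ring
  rw [hlim]
  refine houter.congr fun ε => ?_
  rw [← integral_const_mul]
  congr 1 with z
  simp only [mul_left_comm (deriv q _) (1 / ε), integral_const_mul]
  ring
end

section
/- Let N ≥ 2, α ∈ (1,2), let g : S^{N-1} → (0,∞) be continuous and even, and set J(z) = g(z/|z|) |z|^{-(N+α)} for z ≠ 0. Let q : ℝ → ℝ be C¹ and nondecreasing with limits m₋ at −∞ and m₊ at +∞ and with q'(r) ≤ C_q (1+|r|)^{-(2+α)} for all r, for some C_q > 0. Let d : ℝ^N → ℝ be globally 1-Lipschitz and C² on an open neighborhood of a point x, with |Dd| = 1 on that neighborhood; set e = Dd(x) and W_ε(z) = ( d(x+εz) − d(x) − ε Dd(x)·z ) / ε². Then for every sufficiently small ε > 0 the integral ā_ε = (1/ε) ∫_{ℝ^N} ∫_ℝ q'(ξ) [ q( ξ + e·z + ε W_ε(z) ) − q( ξ + e·z ) ] dξ J(z) dz is absolutely convergent, and as ε → 0⁺, ā_ε → (1/2) ( ∫_ℝ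 Φ(s) |s|^{1−α} ds ) · tr( M_g(e) D²d(x) ), where Φ(s) = ∫_ℝ q'(ξ) q'(ξ+s) dξ (and the integral ∫_ℝ Φ(s)|s|^{1−α} ds is finite). -/
open MeasureTheory Metric Filter
open scoped RealInnerProductSpace Topology

/-!
Integrating in `ξ` first replaces the inner integral by `G(e·z + εW_ε(z)) − G(e·z)`, where
`G(s) = ∫ q'(ξ) q(ξ+s) dξ` is bounded and has derivative `Φ`. Since `q` is nondecreasing, the
integrand has constant sign in `ξ`, so absolute convergence of the double integral amounts to that
of the integral over `z` (`integrable_full`). It remains to pass to the limit in the integral of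
`scaledInt = (1/ε) (G(e·z + εW_ε(z)) − G(e·z)) J(z)`.

Write `z = s e + v` with `v ⊥ e` and put `β = N + α − 2`, so that `N − 1 < β < N`. Two bounds,
uniform in `ε`, hold (`LineBounds`). Pointwise, `|W_ε(z)| ≤ C|z|²` and the boundedness of `Φ` give
`O(|z|^{-β})`. On the line `s ↦ s e + v` the total mass is `O(|v|^{-β})`: where `ε|z| < r`, the
map `s ↦ s + t εW_ε(s e + v)` has derivative at least `1/2`, so a shear change of variables bounds
the mass by `∫ Φ` (`lintegral_shear_le`); where `ε|z| ≥ r`, boundedness of `G` and `1/ε ≤ |z|/r`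
suffice. Integrating the pointwise bound along the line gives `O(|v|^{1-β})` as well, so the mass
of the lines is dominated by `radMaj`, which is `|v|^{1-β}` near `0` and `|v|^{-β}` at infinity and
is integrable on `ℝ^{N-1}` exactly because `N − 1 < β < N`. Dominated convergence along each line
and then in `v` (`LineBounds.tendsto_integral`) yields the limit.

The pointwise limit of the integrand is, by Taylor expansion of `d`,
`limitInt = ½ D²d(x)(z,z) Φ(e·z) J(z)`. Slicing by the hyperplanes `e·z = s` and rescaling
`v = s u`, homogeneity and evenness of `J` separate the variables: the integral is
`½ ∫ Φ(s)|s|^{1-α} ds` times `∫ D²d(x)(e+u,e+u) J(e+u) du` (`integral_limitInt`), and the second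
factor is `tr(M_g(e) D²d(x))` (`trace_mul_hessian`).
-/

/-! ### The autocorrelation of the wave slope -/

/-- The autocorrelation `Φ(s) = ∫ q'(ξ) q'(ξ+s) dξ` of the wave slope. -/
noncomputable def slopeCorr (q : ℝ → ℝ) (s : ℝ) : ℝ := ∫ ξ : ℝ, deriv q ξ * deriv q (ξ + s)

/-- The primitive `G(s) = ∫ q'(ξ) q(ξ+s) dξ` of the autocorrelation. -/
noncomputable def slopePrim (q : ℝ → ℝ) (s : ℝ) : ℝ := ∫ ξ : ℝ, deriv q ξ * q (ξ + s)

section wave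

variable {q : ℝ → ℝ} {B K : ℝ}

theorem exists_abs_bound_of_mono (hq_mono : Monotone q) {a b : ℝ}
    (hbot : Tendsto q atBot (𝓝 a)) (htop : Tendsto q atTop (𝓝 b)) :
    ∃ B, 0 ≤ B ∧ ∀ r, |q r| ≤ B := by
  refine ⟨max |a| |b|, le_max_of_le_left (abs_nonneg _), fun r => ?_⟩
  have h1 : a ≤ q r := hq_mono.le_of_tendsto hbot r
  have h2 : q r ≤ b := hq_mono.ge_of_tendsto htop r
  exact abs_le_max_abs_abs h1 h2

theorem integrable_deriv_of_decay (hq : ContDiff ℝ 1 q) (hq_mono : Monotone q) {α C : ℝ}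
    (hα : 1 < α) (hdecay : ∀ r : ℝ, deriv q r ≤ C * (1 + |r|) ^ (-(2 + α))) :
    Integrable (deriv q) := by
  have h : Integrable (fun r : ℝ => C * (1 + ‖r‖) ^ (-(2 + α))) :=
    (integrable_one_add_norm (by simp; linarith)).const_mul C
  refine h.mono' (hq.continuous_deriv le_rfl).aestronglyMeasurable (.of_forall fun r => ?_)
  rw [Real.norm_of_nonneg hq_mono.deriv_nonneg]
  simpa using hdecay r

theorem deriv_le_of_decay {α C : ℝ} (hC : 0 < C)
    (hα : 1 < α) (hdecay : ∀ r : ℝ, deriv q r ≤ C * (1 + |r|) ^ (-(2 + α))) (r : ℝ) :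
    deriv q r ≤ C := by
  refine (hdecay r).trans ?_
  have : (1 + |r|) ^ (-(2 + α)) ≤ 1 :=
    Real.rpow_le_one_of_one_le_of_nonpos (by linarith [abs_nonneg r]) (by linarith)
  nlinarith

theorem slopeCorr_nonneg (hq_mono : Monotone q) (s : ℝ) : 0 ≤ slopeCorr q s :=
  integral_nonneg fun _ => mul_nonneg hq_mono.deriv_nonneg hq_mono.deriv_nonneg

theorem continuous_slopeCorr (hq : ContDiff ℝ 1 q) (hq_mono : Monotone q)
    (hInt : Integrable (deriv q)) (hK : ∀ r, deriv q r ≤ K) : Continuous (slopeCorr q) := by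
  have hc := hq.continuous_deriv le_rfl
  refine continuous_of_dominated (bound := fun ξ => deriv q ξ * K) (fun s => ?_) (fun s => ?_)
    (hInt.mul_const K) ?_
  · exact Continuous.aestronglyMeasurable (by fun_prop)
  · refine .of_forall fun ξ => ?_
    rw [Real.norm_of_nonneg (mul_nonneg hq_mono.deriv_nonneg hq_mono.deriv_nonneg)]
    exact mul_le_mul_of_nonneg_left (hK _) hq_mono.deriv_nonneg
  · exact .of_forall fun ξ => by fun_prop

theorem slopeCorr_le (hq : ContDiff ℝ 1 q) (hq_mono : Monotone q)
    (hInt : Integrable (deriv q)) (hK : ∀ r, deriv q r ≤ K) (s : ℝ) :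
    slopeCorr q s ≤ (∫ ξ, deriv q ξ) * K := by
  have hc := hq.continuous_deriv le_rfl
  rw [← integral_mul_const]
  refine integral_mono_of_nonneg (.of_forall fun ξ =>
    mul_nonneg hq_mono.deriv_nonneg hq_mono.deriv_nonneg) (hInt.mul_const K)
    (.of_forall fun ξ => mul_le_mul_of_nonneg_left (hK _) hq_mono.deriv_nonneg)

theorem integrable_slopeCorr (hq : ContDiff ℝ 1 q) (hInt : Integrable (deriv q)) :
    Integrable (slopeCorr q) := by
  have hc := hq.continuous_deriv le_rfl
  have h : Integrable (fun p : ℝ × ℝ => deriv q p.2 * deriv q (p.2 + p.1))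
      (volume.prod volume) := by
    rw [integrable_prod_iff' (Continuous.aestronglyMeasurable (by fun_prop))]
    refine ⟨.of_forall fun ξ => (hInt.comp_add_left ξ).const_mul (deriv q ξ), ?_⟩
    have : (fun y => ∫ x, ‖deriv q y * deriv q (y + x)‖) =
        fun y => ‖deriv q y‖ * ∫ x, ‖deriv q x‖ := by
      ext y
      simp_rw [norm_mul]
      rw [integral_const_mul, integral_add_left_eq_self (fun x => ‖deriv q x‖) y]
    simp only [this]
    exact hInt.norm.mul_const _
  exact h.integral_prod_left

theorem integrable_deriv_mul_shift (hq : ContDiff ℝ 1 q) (hInt : Integrable (deriv q))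
    (hB : ∀ r, |q r| ≤ B) (s : ℝ) : Integrable (fun ξ => deriv q ξ * q (ξ + s)) := by
  have hc := hq.continuous
  refine hInt.mul_bdd (c := B) (Continuous.aestronglyMeasurable (by fun_prop))
    (.of_forall fun ξ => ?_)
  exact hB _

theorem hasDerivAt_slopePrim (hq : ContDiff ℝ 1 q) (hq_mono : Monotone q)
    (hInt : Integrable (deriv q)) (hB : ∀ r, |q r| ≤ B) (hK : ∀ r, deriv q r ≤ K) (s : ℝ) :
    HasDerivAt (slopePrim q) (slopeCorr q s) s := by
  have hc := hq.continuous_deriv le_rfl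
  have hc' := hq.continuous
  have hd := hq.differentiable one_ne_zero
  refine (hasDerivAt_integral_of_dominated_loc_of_deriv_le (s := Set.univ)
    (F := fun s ξ => deriv q ξ * q (ξ + s)) (F' := fun s ξ => deriv q ξ * deriv q (ξ + s))
    (bound := fun ξ => deriv q ξ * K) Filter.univ_mem (.of_forall fun s => ?_)
    (integrable_deriv_mul_shift hq hInt hB s) ?_ ?_ (hInt.mul_const K) ?_).2
  · exact Continuous.aestronglyMeasurable (by fun_prop)
  · exact Continuous.aestronglyMeasurable (by fun_prop)
  · refine .of_forall fun ξ s _ => ?_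
    rw [Real.norm_of_nonneg (mul_nonneg hq_mono.deriv_nonneg hq_mono.deriv_nonneg)]
    exact mul_le_mul_of_nonneg_left (hK _) hq_mono.deriv_nonneg
  · refine .of_forall fun ξ s _ => ?_
    exact ((hd (ξ + s)).hasDerivAt.comp_const_add ξ s).const_mul _

theorem integral_slope_mul_sub (hq : ContDiff ℝ 1 q) (hInt : Integrable (deriv q))
    (hB : ∀ r, |q r| ≤ B) (s h : ℝ) :
    ∫ ξ, deriv q ξ * (q (ξ + s + h) - q (ξ + s)) = slopePrim q (s + h) - slopePrim q s := by
  simp only [slopePrim]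
  rw [← integral_sub (integrable_deriv_mul_shift hq hInt hB _)
    (integrable_deriv_mul_shift hq hInt hB _)]
  simp only [mul_sub, add_assoc]

/-- The integrand has a constant sign in `ξ` because `q` is nondecreasing. -/
theorem integral_norm_slope_mul_sub (hq : ContDiff ℝ 1 q) (hq_mono : Monotone q)
    (hInt : Integrable (deriv q)) (hB : ∀ r, |q r| ≤ B) (s h : ℝ) :
    ∫ ξ, ‖deriv q ξ * (q (ξ + s + h) - q (ξ + s))‖ = |slopePrim q (s + h) - slopePrim q s| := by
  rw [← integral_slope_mul_sub hq hInt hB]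
  have hd : ∀ ξ, 0 ≤ deriv q ξ := fun ξ => hq_mono.deriv_nonneg
  rcases le_total 0 h with hh | hh
  · have h0 : ∀ ξ, 0 ≤ deriv q ξ * (q (ξ + s + h) - q (ξ + s)) := fun ξ =>
      mul_nonneg (hd ξ) (sub_nonneg.2 (hq_mono (by linarith)))
    rw [abs_of_nonneg (integral_nonneg h0)]
    simp only [Real.norm_of_nonneg (h0 _)]
  · have h0 : ∀ ξ, deriv q ξ * (q (ξ + s + h) - q (ξ + s)) ≤ 0 := fun ξ =>
      mul_nonpos_of_nonneg_of_nonpos (hd ξ) (sub_nonpos.2 (hq_mono (by linarith)))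
    rw [abs_of_nonpos (integral_nonpos h0)]
    simp only [Real.norm_of_nonpos (h0 _)]
    rw [integral_neg]

theorem abs_slopePrim_le (hq_mono : Monotone q) (hInt : Integrable (deriv q))
    (hB : ∀ r, |q r| ≤ B) (s : ℝ) : |slopePrim q s| ≤ (∫ ξ, deriv q ξ) * B := by
  rw [← integral_mul_const, ← Real.norm_eq_abs]
  refine norm_integral_le_of_norm_le (hInt.mul_const B) (.of_forall fun ξ => ?_)
  rw [norm_mul, Real.norm_of_nonneg hq_mono.deriv_nonneg]
  exact mul_le_mul_of_nonneg_left (hB _) hq_mono.deriv_nonneg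

/-- The weight `|s|^{1-α}` is integrable near `0` and bounded by `1` away from it. -/
theorem integrable_mul_abs_rpow {Φ : ℝ → ℝ} {α L : ℝ} (hα1 : 1 < α) (hα2 : α < 2)
    (hΦ : Continuous Φ) (hInt : Integrable Φ) (hL : ∀ s, |Φ s| ≤ L) :
    Integrable (fun s => Φ s * |s| ^ (1 - α)) := by
  have hI : IntegrableOn (fun s : ℝ => |s| ^ (1 - α)) (Set.Icc (-1) 1) := by
    have h1 : IntervalIntegrable (fun s : ℝ => |s| ^ (1 - α)) volume 0 1 := by
      refine (intervalIntegral.intervalIntegrable_rpow' (r := 1 - α) (by linarith)).congr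
        (fun s hs => ?_)
      rw [Set.uIoc_of_le zero_le_one] at hs
      simp only [abs_of_pos hs.1]
    have h2 : IntervalIntegrable (fun s : ℝ => |s| ^ (1 - α)) volume (-1) 0 := by
      have := (IntervalIntegrable.comp_sub_left h1 0)
      simp only [zero_sub, abs_neg, neg_zero] at this
      simpa using this.symm
    exact (intervalIntegrable_iff_integrableOn_Icc_of_le (by norm_num)).1 (h2.trans h1)
  have hm : AEStronglyMeasurable (fun s : ℝ => Φ s * |s| ^ (1 - α)) volume := by
    refine hΦ.aestronglyMeasurable.mul (Measurable.aestronglyMeasurable ?_)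
    fun_prop
  have hb : Integrable (fun s => |Φ s| +
      (Set.Icc (-1 : ℝ) 1).indicator (fun s => L * |s| ^ (1 - α)) s) :=
    hInt.abs.add ((integrable_indicator_iff measurableSet_Icc).2 (hI.const_mul L))
  refine hb.mono' hm (.of_forall fun s => ?_)
  have hp : 0 ≤ |s| ^ (1 - α) := by positivity
  rw [norm_mul, Real.norm_eq_abs, Real.norm_of_nonneg hp]
  by_cases hs : s ∈ Set.Icc (-1 : ℝ) 1
  · rw [Set.indicator_of_mem hs]
    have := mul_le_mul_of_nonneg_right (hL s) hp
    linarith [abs_nonneg (Φ s)]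
  · rw [Set.indicator_of_notMem hs]
    have : |s| ^ (1 - α) ≤ 1 := by
      refine Real.rpow_le_one_of_one_le_of_nonpos ?_ (by linarith)
      by_contra hlt
      exact hs (abs_le.1 (not_le.1 hlt).le)
    nlinarith [abs_nonneg (Φ s)]

end wave

/-! ### Iterated dominated convergence along the lines parallel to `e` -/

/-- The radial majorant `r^{1-β}` for `r ≤ 1`, `r^{-β}` for `r > 1`. -/
noncomputable def radMaj (β r : ℝ) : ℝ := if r ≤ 1 then r ^ (1 - β) else r ^ (-β)

/-- The constant `∫ (1+s²)^{-β/2} ds`. -/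
noncomputable def lineConst (β : ℝ) : ℝ := ∫ s : ℝ, (1 + ‖s‖ ^ 2) ^ (-β / 2)

theorem lineConst_nonneg (β : ℝ) : 0 ≤ lineConst β :=
  integral_nonneg fun s => by positivity

theorem line_rescale (β : ℝ) {r : ℝ} (hr : 0 < r) (s : ℝ) :
    (s ^ 2 + r ^ 2) ^ (-β / 2) = r ^ (-β) * (1 + ‖s / r‖ ^ 2) ^ (-β / 2) := by
  have h1 : s ^ 2 + r ^ 2 = r ^ 2 * (1 + ‖s / r‖ ^ 2) := by
    rw [Real.norm_eq_abs, sq_abs]; field_simp; ring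
  rw [h1, Real.mul_rpow (by positivity) (by positivity), ← Real.rpow_natCast,
    ← Real.rpow_mul hr.le]
  congr 2
  push_cast; ring

theorem integrable_line {β r : ℝ} (hβ : 1 < β) (hr : 0 < r) :
    Integrable (fun s : ℝ => (s ^ 2 + r ^ 2) ^ (-β / 2)) := by
  simp_rw [line_rescale β hr]
  refine Integrable.const_mul ?_ _
  exact (integrable_rpow_neg_one_add_norm_sq (E := ℝ) (r := β) (by simpa)).comp_div hr.ne'

theorem integral_line {β r : ℝ} (hr : 0 < r) :
    ∫ s : ℝ, (s ^ 2 + r ^ 2) ^ (-β / 2) = lineConst β * r ^ (1 - β) := by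
  simp_rw [line_rescale β hr]
  rw [integral_const_mul,
    Measure.integral_comp_div (fun s : ℝ => (1 + ‖s‖ ^ 2) ^ (-β / 2)) r, abs_of_pos hr,
    smul_eq_mul, lineConst, show 1 - β = -β + 1 by ring, Real.rpow_add_one hr.ne']
  ring

section lines

variable {V : Type*} [NormedAddCommGroup V]

/-- The two bounds that make iterated dominated convergence work for a function on `V × ℝ`: a
pointwise one, which is integrable on each line `{v} × ℝ` with total mass `O(|v|^{1-β})`, and a
bound of the mass of each line by `|v|^{-β}`. -/
structure LineBounds (A β : ℝ) (F : V × ℝ → ℝ) : Prop where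
  cont : ∀ v : V, v ≠ 0 → Continuous fun s : ℝ => F (v, s)
  pt : ∀ v : V, v ≠ 0 → ∀ s : ℝ, |F (v, s)| ≤ A * (s ^ 2 + ‖v‖ ^ 2) ^ (-β / 2)
  mass : ∀ v : V, v ≠ 0 → ∫⁻ s : ℝ, ‖F (v, s)‖ₑ ≤ ENNReal.ofReal (A * ‖v‖ ^ (-β))

theorem LineBounds.integrable_line {A β : ℝ} {F : V × ℝ → ℝ} (hF : LineBounds A β F)
    (hβ : 1 < β) {v : V} (hv : v ≠ 0) : Integrable fun s : ℝ => F (v, s) :=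
  ((_root_.integrable_line hβ (norm_pos_iff.2 hv)).const_mul A).mono'
    (hF.cont v hv).aestronglyMeasurable (.of_forall (hF.pt v hv))

theorem LineBounds.integral_norm_le {A β : ℝ} {F : V × ℝ → ℝ} (hF : LineBounds A β F)
    (hA : 0 ≤ A) (hβ : 1 < β) {v : V} (hv : v ≠ 0) :
    ∫ s : ℝ, ‖F (v, s)‖ ≤ A * (1 + lineConst β) * radMaj β ‖v‖ := by
  have hv' := norm_pos_iff.2 hv
  have hc := lineConst_nonneg β
  rw [radMaj]
  split_ifs with h
  · calc ∫ s : ℝ, ‖F (v, s)‖ ≤ ∫ s : ℝ, A * (s ^ 2 + ‖v‖ ^ 2) ^ (-β / 2) :=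
          integral_mono (hF.integrable_line hβ hv).norm
            ((_root_.integrable_line hβ hv').const_mul A) (hF.pt v hv)
      _ = A * lineConst β * ‖v‖ ^ (1 - β) := by
          rw [integral_const_mul, integral_line hv', mul_assoc]
      _ ≤ _ := by gcongr; linarith
  · rw [integral_norm_eq_lintegral_enorm (hF.cont v hv).aestronglyMeasurable]
    calc _ ≤ A * ‖v‖ ^ (-β) := ENNReal.toReal_le_of_le_ofReal (by positivity) (hF.mass v hv)
      _ ≤ _ := by
          gcongr
          nlinarith

end lines

section radial

variable {V : Type*} [NormedAddCommGroup V] [NormedSpace ℝ V] [FiniteDimensional ℝ V]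
  [MeasurableSpace V] [BorelSpace V] [Nontrivial V] (μ : Measure V) [μ.IsAddHaarMeasure]

theorem integrable_radMaj {β : ℝ} (h1 : (Module.finrank ℝ V : ℝ) < β)
    (h2 : β < Module.finrank ℝ V + 1) : Integrable (fun v : V => radMaj β ‖v‖) μ := by
  have hpos : 1 ≤ Module.finrank ℝ V := Module.finrank_pos
  have key : ∀ y : ℝ, 0 < y → ∀ c : ℝ,
      y ^ (Module.finrank ℝ V - 1) * y ^ c = y ^ ((Module.finrank ℝ V : ℝ) - 1 + c) := by
    intro y hy c
    rw [Real.rpow_add hy, ← Real.rpow_natCast]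
    congr 2
    push_cast [hpos]; ring
  rw [integrable_fun_norm_addHaar μ (f := radMaj β), ← Set.Ioc_union_Ioi_eq_Ioi zero_le_one]
  refine IntegrableOn.union ?_ ?_
  · have : IntegrableOn (fun y : ℝ => y ^ ((Module.finrank ℝ V : ℝ) - β)) (Set.Ioc 0 1) :=
      (intervalIntegrable_iff_integrableOn_Ioc_of_le zero_le_one).1
        (intervalIntegral.intervalIntegrable_rpow' (by linarith))
    refine this.congr_fun (fun y hy => ?_) measurableSet_Ioc
    simp only [smul_eq_mul, radMaj, if_pos hy.2]
    rw [key y hy.1]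
    congr 1; ring
  · have : IntegrableOn (fun y : ℝ => y ^ ((Module.finrank ℝ V : ℝ) - 1 + -β)) (Set.Ioi 1) :=
      integrableOn_Ioi_rpow_of_lt (by linarith) zero_lt_one
    refine this.congr_fun (fun y hy => ?_) measurableSet_Ioi
    have hy' : (1 : ℝ) < y := hy
    simp only [smul_eq_mul, radMaj, if_neg (not_le.2 hy')]
    rw [key y (by linarith)]

theorem ae_ne_zero_haar : ∀ᵐ v : V ∂μ, v ≠ 0 := by
  exact Measure.ae_ne μ 0

theorem LineBounds.integrable {A β : ℝ} {F : V × ℝ → ℝ} (hF : LineBounds A β F)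
    (hA : 0 ≤ A) (hβ1 : 1 < β) (h1 : (Module.finrank ℝ V : ℝ) < β)
    (h2 : β < Module.finrank ℝ V + 1) (hm : AEStronglyMeasurable F (μ.prod volume)) :
    Integrable F (μ.prod volume) := by
  have hae := ae_ne_zero_haar μ
  rw [integrable_prod_iff hm]
  refine ⟨hae.mono fun v hv => hF.integrable_line hβ1 hv, ?_⟩
  refine ((integrable_radMaj μ h1 h2).const_mul (A * (1 + lineConst β))).mono'
    hm.norm.integral_prod_right' (hae.mono fun v hv => ?_)
  rw [Real.norm_of_nonneg (integral_nonneg fun _ => norm_nonneg _)]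
  exact hF.integral_norm_le hA hβ1 hv

/-- Dominated convergence on each line `{v} × ℝ`, then in `v` with majorant `radMaj`. -/
theorem LineBounds.tendsto_integral {A β : ℝ} {F : ℝ → V × ℝ → ℝ} {F₀ : V × ℝ → ℝ}
    (hF : ∀ᶠ ε in 𝓝[>] (0 : ℝ), LineBounds A β (F ε)) (hF₀ : LineBounds A β F₀)
    (hA : 0 ≤ A) (hβ1 : 1 < β) (h1 : (Module.finrank ℝ V : ℝ) < β)
    (h2 : β < Module.finrank ℝ V + 1)
    (hm : ∀ ε, AEStronglyMeasurable (F ε) (μ.prod volume))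
    (hm₀ : AEStronglyMeasurable F₀ (μ.prod volume))
    (hlim : ∀ v : V, v ≠ 0 → ∀ s, Tendsto (fun ε => F ε (v, s)) (𝓝[>] 0) (𝓝 (F₀ (v, s)))) :
    Tendsto (fun ε => ∫ p, F ε p ∂(μ.prod volume)) (𝓝[>] 0)
      (𝓝 (∫ p, F₀ p ∂(μ.prod volume))) := by
  have hae := ae_ne_zero_haar μ
  rw [integral_prod _ (hF₀.integrable μ hA hβ1 h1 h2 hm₀)]
  have hev : (fun ε => ∫ v, (∫ s, F ε (v, s)) ∂μ) =ᶠ[𝓝[>] 0]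
      fun ε => ∫ p, F ε p ∂(μ.prod volume) := hF.mono fun ε hε =>
    (integral_prod _ (hε.integrable μ hA hβ1 h1 h2 (hm ε))).symm
  refine Tendsto.congr' hev ?_
  refine tendsto_integral_filter_of_dominated_convergence
    (fun v => A * (1 + lineConst β) * radMaj β ‖v‖)
    (.of_forall fun ε => (hm ε).integral_prod_right') ?_
    ((integrable_radMaj μ h1 h2).const_mul _) ?_
  · exact hF.mono fun ε hε => hae.mono fun v hv =>
      (norm_integral_le_integral_norm _).trans (hε.integral_norm_le hA hβ1 hv)
  · refine hae.mono fun v hv => ?_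
    refine tendsto_integral_filter_of_dominated_convergence
      (fun s => A * (s ^ 2 + ‖v‖ ^ 2) ^ (-β / 2)) ?_ ?_
      ((_root_.integrable_line hβ1 (norm_pos_iff.2 hv)).const_mul A)
      (.of_forall fun s => hlim v hv s)
    · exact hF.mono fun ε hε => (hε.cont v hv).aestronglyMeasurable
    · exact hF.mono fun ε hε => .of_forall (hε.pt v hv)

end radial

/-! ### The shear change of variables -/

/-- For `t ∈ (0,1]` the map `s ↦ s + t η(s)` is injective on `S` with derivative at least `1/2`,
so it compresses length by at most a factor `2`. -/
theorem lintegral_shear_le {Φ η η' : ℝ → ℝ} {S : Set ℝ} (hΦ : Continuous Φ)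
    (hη : Continuous η) (hS : MeasurableSet S) (hd : ∀ s ∈ S, HasDerivAt η (η' s) s)
    (hb : ∀ s ∈ S, |η' s| ≤ 1 / 2)
    (hlip : ∀ s ∈ S, ∀ s' ∈ S, |η s - η s'| ≤ 1 / 2 * |s - s'|) :
    ∫⁻ s in S, ∫⁻ t in Set.Ioc (0 : ℝ) 1, ‖Φ (s + t * η s)‖ₑ ≤ 2 * ∫⁻ s, ‖Φ s‖ₑ := by
  rw [lintegral_lintegral_swap (Continuous.aemeasurable (by fun_prop))]
  have key : ∀ t ∈ Set.Ioc (0 : ℝ) 1,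
      ∫⁻ s in S, ‖Φ (s + t * η s)‖ₑ ≤ 2 * ∫⁻ s, ‖Φ s‖ₑ := by
    intro t ht
    have hcv := lintegral_image_eq_lintegral_abs_deriv_mul (f := fun s => s + t * η s)
      (f' := fun s => 1 + t * η' s) hS
      (fun s hs => ((hasDerivAt_id s).add ((hd s hs).const_mul t)).hasDerivWithinAt) ?_
      (fun y => ‖Φ y‖ₑ)
    · calc ∫⁻ s in S, ‖Φ (s + t * η s)‖ₑ
          ≤ ∫⁻ s in S, 2 * (ENNReal.ofReal |1 + t * η' s| * ‖Φ (s + t * η s)‖ₑ) := by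
            refine setLIntegral_mono' hS fun s hs => ?_
            have h1 : (1 : ℝ) / 2 ≤ |1 + t * η' s| := by
              refine le_trans ?_ (le_abs_self _)
              have h2 := (abs_le.1 (hb s hs)).1
              nlinarith [ht.1, ht.2]
            have h2 : (1 : ENNReal) ≤ 2 * ENNReal.ofReal |1 + t * η' s| := by
              rw [show (2 : ENNReal) = ENNReal.ofReal 2 by simp,
                ← ENNReal.ofReal_mul (by norm_num), ← ENNReal.ofReal_one]
              exact ENNReal.ofReal_le_ofReal (by linarith)
            rw [← mul_assoc]
            exact le_mul_of_one_le_left' h2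
        _ = 2 * ∫⁻ s in S, ENNReal.ofReal |1 + t * η' s| * ‖Φ (s + t * η s)‖ₑ :=
            lintegral_const_mul' _ _ (by simp)
        _ ≤ 2 * ∫⁻ s, ‖Φ s‖ₑ := by
            rw [← hcv]
            gcongr
            exact Measure.restrict_le_self
    · intro s hs s' hs' heq
      have h1 := hlip s hs s' hs'
      have h2 : s - s' = -(t * (η s - η s')) := by
        simp only at heq; linarith
      have h3 : |s - s'| ≤ 1 * (1 / 2 * |s - s'|) := by
        conv_lhs => rw [h2, abs_neg, abs_mul, abs_of_pos ht.1]
        exact mul_le_mul ht.2 h1 (abs_nonneg _) zero_le_one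
      have h4 : |s - s'| = 0 := le_antisymm (by linarith) (abs_nonneg _)
      exact sub_eq_zero.1 (abs_eq_zero.1 h4)
  calc _ ≤ ∫⁻ t in Set.Ioc (0 : ℝ) 1, 2 * ∫⁻ s, ‖Φ s‖ₑ :=
        setLIntegral_mono' measurableSet_Ioc key
    _ = _ := by simp

theorem enorm_sub_le_of_hasDerivAt {G Φ : ℝ → ℝ} (hΦ : Continuous Φ)
    (hG : ∀ s, HasDerivAt G (Φ s) s) (s h : ℝ) :
    ‖G (s + h) - G s‖ₑ ≤ ‖h‖ₑ * ∫⁻ t in Set.Ioc (0 : ℝ) 1, ‖Φ (s + t * h)‖ₑ := by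
  have h1 : ∀ t ∈ Set.uIcc (0 : ℝ) 1,
      HasDerivAt (fun t => G (s + t * h)) (Φ (s + t * h) * h) t := by
    intro t _
    have := ((hasDerivAt_id t).mul_const h).const_add s
    exact ((hG (s + t * h)).comp t this).congr_deriv (by simp)
  have h2 := intervalIntegral.integral_eq_sub_of_hasDerivAt h1
    (Continuous.intervalIntegrable (by fun_prop) _ _)
  simp only [one_mul, zero_mul, add_zero] at h2
  rw [← h2, intervalIntegral.integral_of_le zero_le_one, integral_mul_const, enorm_mul, mul_comm]
  gcongr
  exact enorm_integral_le_lintegral_enorm _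

/-! ### The phase remainder -/

section phase

variable {E : Type*} [NormedAddCommGroup E] [InnerProductSpace ℝ E]

/-- The phase remainder `ε W_ε(z) = (d(x+εz) − d(x) − ε e·z)/ε`. -/
noncomputable def phaseRem (d : E → ℝ) (x e : E) (ε : ℝ) (z : E) : ℝ :=
  (d (x + ε • z) - d x - ε * ⟪e, z⟫) / ε

theorem phaseRem_eq (d : E → ℝ) (x e : E) {ε : ℝ} (hε : 0 < ε) (z : E) :
    ε * ((d (x + ε • z) - d x - ε * ⟪e, z⟫) / ε ^ 2) = phaseRem d x e ε z := by
  rw [phaseRem]; field_simp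

theorem continuous_phaseRem {d : E → ℝ} (hd : Continuous d) (x e : E) (ε : ℝ) :
    Continuous (phaseRem d x e ε) := by
  unfold phaseRem; fun_prop

/-- Quantitative control of the phase remainder: a global quadratic bound, and smallness of its
derivative on the region `ε|z| < r`. -/
structure PhaseControl (d : E → ℝ) (x e : E) (r C : ℝ) : Prop where
  r_pos : 0 < r
  r_le : r ≤ 1
  C_pos : 0 < C
  quad : ∀ ε > 0, ∀ z, |phaseRem d x e ε z| ≤ C * ε * ‖z‖ ^ 2
  lip : ∀ ε > 0, ∀ z z', ‖ε • z‖ < r → ‖ε • z'‖ < r →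
    |phaseRem d x e ε z - phaseRem d x e ε z'| ≤ 1 / 2 * ‖z - z'‖
  deriv : ∀ ε > 0, ∀ z, ‖ε • z‖ < r → ∃ D : E →L[ℝ] ℝ, ‖D‖ ≤ 1 / 2 ∧
    HasFDerivAt (phaseRem d x e ε) D z

/-- Near `x` the bounds come from the local Lipschitz continuity of `Dd`; where `ε|z| ≥ r` the
quadratic bound only uses that `d` is `1`-Lipschitz, since then `2ε|z| ≤ (2/r) (ε|z|)²`. -/
theorem exists_phaseControl {d : E → ℝ} (hd_lip : LipschitzWith 1 d) {x e : E} {U : Set E}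
    (hU : IsOpen U) (hxU : x ∈ U) (hdU : ContDiffOn ℝ 2 d U) (he : ‖e‖ = 1)
    (hin : innerSL ℝ e = fderiv ℝ d x) : ∃ r C, PhaseControl d x e r C := by
  have hcd : ContDiffAt ℝ 2 d x := hdU.contDiffAt (hU.mem_nhds hxU)
  have hfd : ContDiffAt ℝ 1 (fderiv ℝ d) x := hcd.fderiv_right (by norm_num)
  obtain ⟨L, T, hT, hL⟩ := hfd.exists_lipschitzOnWith
  obtain ⟨r₁, hr₁, hball⟩ := Metric.mem_nhds_iff.1 (Filter.inter_mem hT (hU.mem_nhds hxU))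
  -- `r ≤ 1 / (2(L+1))` makes the derivative bound `L r` of the remainder at most `1/2`
  set r : ℝ := min (min r₁ 1) (1 / (2 * (L + 1))) with hr
  have hLp : (0 : ℝ) < 2 * (L + 1) := by positivity
  have hr0 : 0 < r := by positivity
  have hrr : r ≤ r₁ := (min_le_left _ _).trans (min_le_left _ _)
  have hr1 : r ≤ 1 := (min_le_left _ _).trans (min_le_right _ _)
  have hrL : L * r ≤ 1 / 2 := by
    have h := min_le_right (min r₁ 1) (1 / (2 * ((L : ℝ) + 1)))
    rw [← hr, le_div_iff₀ hLp] at h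
    nlinarith [L.2]
  have hxT : x ∈ T := mem_of_mem_nhds hT
  have hdiff : ∀ y ∈ ball x r, HasFDerivAt d (fderiv ℝ d y) y := fun y hy =>
    ((hdU.contDiffAt (hU.mem_nhds (hball (ball_subset_ball hrr hy)).2)).differentiableAt
      (by norm_num)).hasFDerivAt
  have hD : ∀ y ∈ ball x r, ‖fderiv ℝ d y - innerSL ℝ e‖ ≤ L * ‖y - x‖ := fun y hy => by
    rw [hin]
    exact hL.norm_sub_le (hball (ball_subset_ball hrr hy)).1 hxT
  have hmem : ∀ ε : ℝ, ∀ z : E, ‖ε • z‖ < r → x + ε • z ∈ ball x r := fun ε z h => by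
    simpa [mem_ball_iff_norm] using h
  refine ⟨r, L + 2 / r, hr0, hr1, by positivity, ?_, ?_, ?_⟩
  · intro ε hε z
    rw [phaseRem, abs_div, abs_of_pos hε, div_le_iff₀ hε]
    rcases lt_or_ge ‖ε • z‖ r with h | h
    · have hsub : closedBall x ‖ε • z‖ ⊆ ball x r := closedBall_subset_ball h
      have := Convex.norm_image_sub_le_of_norm_hasFDerivWithin_le' (f := d)
        (s := closedBall x ‖ε • z‖) (C := L * ‖ε • z‖) (x := x) (y := x + ε • z)
        (f' := fderiv ℝ d) (φ := innerSL ℝ e)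
        (fun y hy => (hdiff y (hsub hy)).hasFDerivWithinAt)
        (fun y hy => (hD y (hsub hy)).trans (by
          have := mem_closedBall_iff_norm.1 hy
          gcongr)) (convex_closedBall _ _) (by simp) (by simp)
      simp only [add_sub_cancel_left, innerSL_apply_apply, inner_smul_right,
        Real.norm_eq_abs] at this
      refine this.trans ?_
      rw [norm_smul, Real.norm_of_nonneg hε.le]
      have : 0 ≤ 2 / r * (ε * ‖z‖) ^ 2 := by positivity
      nlinarith
    · have h1 : |d (x + ε • z) - d x| ≤ ‖ε • z‖ := by
        have := hd_lip.norm_sub_le (x + ε • z) x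
        simpa using this
      have h2 : |ε * ⟪e, z⟫| ≤ ‖ε • z‖ := by
        rw [← inner_smul_right]
        have := abs_real_inner_le_norm e (ε • z)
        rwa [he, one_mul] at this
      have h3 : |d (x + ε • z) - d x - ε * ⟪e, z⟫| ≤ 2 * ‖ε • z‖ :=
        (abs_sub _ _).trans (by linarith)
      refine h3.trans ?_
      have h4 : 2 * ‖ε • z‖ ≤ 2 / r * ‖ε • z‖ ^ 2 := by
        rw [div_mul_eq_mul_div, le_div_iff₀ hr0]
        nlinarith [norm_nonneg (ε • z)]
      refine h4.trans ?_
      rw [norm_smul, Real.norm_of_nonneg hε.le]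
      have : 0 ≤ L * (ε * ‖z‖) ^ 2 := by positivity
      nlinarith
  · intro ε hε z z' hz hz'
    have := Convex.norm_image_sub_le_of_norm_hasFDerivWithin_le' (f := d)
        (s := ball x r) (C := 1 / 2) (x := x + ε • z') (y := x + ε • z)
        (f' := fderiv ℝ d) (φ := innerSL ℝ e)
        (fun y hy => (hdiff y hy).hasFDerivWithinAt)
        (fun y hy => (hD y hy).trans (by
          have := mem_ball_iff_norm.1 hy
          have : L * ‖y - x‖ ≤ L * r := by gcongr
          linarith)) (convex_ball _ _) (hmem _ _ hz') (hmem _ _ hz)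
    rw [add_sub_add_left_eq_sub, ← smul_sub, norm_smul, Real.norm_of_nonneg hε.le,
      map_smul, innerSL_apply_apply, inner_sub_right, smul_eq_mul, Real.norm_eq_abs] at this
    rw [phaseRem, phaseRem, ← sub_div, abs_div, abs_of_pos hε, div_le_iff₀ hε]
    calc _ = |d (x + ε • z) - d (x + ε • z') - ε * (⟪e, z⟫ - ⟪e, z'⟫)| := by
          congr 1; ring
      _ ≤ _ := this
      _ = _ := by ring
  · intro ε hε z hz
    have hy := hmem _ _ hz
    refine ⟨fderiv ℝ d (x + ε • z) - innerSL ℝ e, (hD _ hy).trans ?_, ?_⟩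
    · have := mem_ball_iff_norm.1 hy
      have : L * ‖x + ε • z - x‖ ≤ L * r := by gcongr
      linarith
    · have hi : HasFDerivAt (fun z : E => x + ε • z) (ε • ContinuousLinearMap.id ℝ E) z :=
        ((hasFDerivAt_id z).const_smul ε).const_add x
      have hc := (hdiff _ hy).comp z hi
      have hl : HasFDerivAt (fun z : E => ε * ⟪e, z⟫) (ε • innerSL ℝ e) z :=
        (innerSL ℝ e).hasFDerivAt.const_mul ε
      have := ((hc.sub_const (d x)).sub hl).mul_const ε⁻¹
      refine (this.congr_of_eventuallyEq (.of_forall fun w => ?_)).congr_fderiv ?_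
      · simp [phaseRem, div_eq_mul_inv]
      · ext w
        simp
        field_simp

/-- Second-order Taylor expansion of the phase along a ray. -/
theorem tendsto_phaseRem_div {d : E → ℝ} {x e : E} {U : Set E}
    (hU : IsOpen U) (hxU : x ∈ U) (hdU : ContDiffOn ℝ 2 d U)
    (hin : innerSL ℝ e = fderiv ℝ d x) (z : E) :
    Tendsto (fun ε => phaseRem d x e ε z / ε) (𝓝[>] 0)
      (𝓝 (1 / 2 * fderiv ℝ (fderiv ℝ d) x z z)) := by
  have hcd : ContDiffAt ℝ 2 d x := hdU.contDiffAt (hU.mem_nhds hxU)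
  have hfd : ContDiffAt ℝ 1 (fderiv ℝ d) x := hcd.fderiv_right (by norm_num)
  have hray : ∀ t : ℝ, HasDerivAt (fun t : ℝ => x + t • z) z t := fun t => by
    simpa using ((hasDerivAt_id t).smul_const z).const_add x
  have hcont : Continuous (fun t : ℝ => x + t • z) := by fun_prop
  have hin' : ⟪e, z⟫ = fderiv ℝ d x z := by rw [← hin]; simp
  have hev : ∀ᶠ t in 𝓝 (0 : ℝ), x + t • z ∈ U :=
    hcont.continuousAt.eventually_mem (by simpa using hU.mem_nhds hxU)
  have hf : ∀ᶠ t in 𝓝[>] (0 : ℝ), HasDerivAt (fun t => d (x + t • z) - d x - t * ⟪e, z⟫)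
      (fderiv ℝ d (x + t • z) z - ⟪e, z⟫) t := by
    refine (hev.filter_mono nhdsWithin_le_nhds).mono fun t ht => ?_
    have h1 := ((hdU.contDiffAt (hU.mem_nhds ht)).differentiableAt
      (by norm_num)).hasFDerivAt.comp_hasDerivAt t (hray t)
    exact ((h1.sub_const (d x)).sub ((hasDerivAt_id t).mul_const ⟪e, z⟫)).congr_deriv (by simp)
  have hg : ∀ t : ℝ, HasDerivAt (fun t : ℝ => t ^ 2) (2 * t) t := fun t => by
    simpa using hasDerivAt_pow 2 t
  have hF : HasDerivAt (fun t : ℝ => fderiv ℝ d (x + t • z) z)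
      (fderiv ℝ (fderiv ℝ d) x z z) 0 := by
    have h0 : HasFDerivAt (fderiv ℝ d) (fderiv ℝ (fderiv ℝ d) x) (x + (0 : ℝ) • z) := by
      simpa using (hfd.differentiableAt (by norm_num)).hasFDerivAt
    have h1 := h0.comp_hasDerivAt (0 : ℝ) (hray 0)
    simpa using h1.clm_apply (hasDerivAt_const (0 : ℝ) z)
  have hslope := (hasDerivAt_iff_tendsto_slope.1 hF).mono_left
    (nhdsWithin_mono (0 : ℝ) (s := Set.Ioi 0) (fun t ht => (ne_of_gt ht : t ≠ 0)))
  have hmain := HasDerivAt.lhopital_zero_nhdsGT (a := 0)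
    (l := 𝓝 (1 / 2 * fderiv ℝ (fderiv ℝ d) x z z)) hf
    (.of_forall hg) ?_ ?_ ?_ ?_
  · refine hmain.congr fun t => ?_
    rw [phaseRem, div_div, sq]
  · filter_upwards [self_mem_nhdsWithin] with t ht
    have : (0 : ℝ) < t := ht
    positivity
  · have hd0 : ContinuousAt (fun t : ℝ => d (x + t • z) - d x - t * ⟪e, z⟫) 0 := by
      have : ContinuousAt (fun t : ℝ => d (x + t • z)) 0 :=
        ContinuousAt.comp (by simpa using hcd.continuousAt) hcont.continuousAt
      exact (this.sub continuousAt_const).sub (by fun_prop)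
    simpa using hd0.tendsto.mono_left (nhdsWithin_le_nhds (s := Set.Ioi (0 : ℝ)))
  · have : Continuous fun t : ℝ => t ^ 2 := by fun_prop
    simpa using (this.tendsto 0).mono_left (nhdsWithin_le_nhds (s := Set.Ioi (0 : ℝ)))
  · refine (hslope.const_mul (1 / 2)).congr fun t => ?_
    simp only [slope, vsub_eq_sub, sub_zero, zero_smul, add_zero, smul_eq_mul, hin']
    rw [mul_comm 2 t, div_mul_eq_div_div, div_eq_mul_inv, div_eq_mul_inv]
    ring

end phase

/-! ### Coordinates along `e` and its orthogonal complement -/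

section coords

variable {E V : Type*} [NormedAddCommGroup E] [InnerProductSpace ℝ E]
  [NormedAddCommGroup V] [InnerProductSpace ℝ V]

/-- The coordinates `(v, s) ↦ s e + φ(v)` on `E ≅ e^⊥ × ℝ`. -/
noncomputable def lineMap (e : E) (φ : V →ₗᵢ[ℝ] E) (p : V × ℝ) : E := p.2 • e + φ p.1

variable {e : E} {φ : V →ₗᵢ[ℝ] E}

theorem continuous_lineMap : Continuous (lineMap e φ) := by
  have := φ.continuous
  unfold lineMap; fun_prop

theorem inner_lineMap (he : ‖e‖ = 1) (hort : ∀ v, ⟪e, φ v⟫ = 0) (v : V) (s : ℝ) :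
    ⟪e, lineMap e φ (v, s)⟫ = s := by
  simp [lineMap, inner_add_right, inner_smul_right, hort, he]

theorem norm_sq_lineMap (he : ‖e‖ = 1) (hort : ∀ v, ⟪e, φ v⟫ = 0) (v : V) (s : ℝ) :
    ‖lineMap e φ (v, s)‖ ^ 2 = s ^ 2 + ‖v‖ ^ 2 := by
  rw [lineMap, norm_add_sq_real]
  simp [inner_smul_left, hort, norm_smul, he]

theorem norm_le_norm_lineMap (he : ‖e‖ = 1) (hort : ∀ v, ⟪e, φ v⟫ = 0) (v : V) (s : ℝ) :
    ‖v‖ ≤ ‖lineMap e φ (v, s)‖ := by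
  refine le_of_sq_le_sq ?_ (norm_nonneg _)
  rw [norm_sq_lineMap he hort]
  nlinarith [sq_nonneg s]

theorem norm_rpow_lineMap (he : ‖e‖ = 1) (hort : ∀ v, ⟪e, φ v⟫ = 0) (β : ℝ) (v : V) (s : ℝ) :
    ‖lineMap e φ (v, s)‖ ^ (-β) = (s ^ 2 + ‖v‖ ^ 2) ^ (-β / 2) := by
  rw [← norm_sq_lineMap he hort, ← Real.rpow_natCast, ← Real.rpow_mul (norm_nonneg _)]
  congr 1
  push_cast; ring

theorem lineMap_ne_zero (he : ‖e‖ = 1) (hort : ∀ v, ⟪e, φ v⟫ = 0) {v : V} (hv : v ≠ 0)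
    (s : ℝ) : lineMap e φ (v, s) ≠ 0 :=
  norm_pos_iff.1 ((norm_pos_iff.2 hv).trans_le (norm_le_norm_lineMap he hort v s))

theorem lineMap_smul (s : ℝ) (u : V) : lineMap e φ (s • u, s) = s • lineMap e φ (u, 1) := by
  simp [lineMap]

variable [FiniteDimensional ℝ E] [MeasurableSpace E] [BorelSpace E]
  [FiniteDimensional ℝ V] [MeasurableSpace V] [BorelSpace V]

/-- In these coordinates Lebesgue measure is a product, since `lineMap` is a surjective isometry
for the `ℓ²` norm on `V × ℝ`. -/
theorem exists_measurePreserving_lineMap (he : ‖e‖ = 1) (hort : ∀ v, ⟪e, φ v⟫ = 0)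
    (hrank : Module.finrank ℝ E = Module.finrank ℝ V + 1) :
    MeasurePreserving (lineMap e φ) (volume.prod volume) volume ∧
      MeasurableEmbedding (lineMap e φ) := by
  let T : WithLp 2 (V × ℝ) →ₗ[ℝ] E :=
    { toFun := fun p => lineMap e φ (WithLp.ofLp p)
      map_add' := fun p q => by simp [lineMap, add_smul]; abel
      map_smul' := fun c p => by simp [lineMap, mul_smul] }
  let I : WithLp 2 (V × ℝ) →ₗᵢ[ℝ] E :=
    ⟨T, fun p => by
      refine (sq_eq_sq₀ (norm_nonneg _) (norm_nonneg _)).1 ?_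
      rw [WithLp.prod_norm_sq_eq_of_L2]
      change ‖lineMap e φ (p.fst, p.snd)‖ ^ 2 = _
      rw [norm_sq_lineMap he hort, Real.norm_eq_abs, sq_abs, add_comm]⟩
  have hfr : Module.finrank ℝ (WithLp 2 (V × ℝ)) = Module.finrank ℝ E := by
    rw [(WithLp.linearEquiv 2 ℝ (V × ℝ)).finrank_eq, Module.finrank_prod, hrank]
    simp
  let Q : WithLp 2 (V × ℝ) ≃ₗᵢ[ℝ] E := I.toLinearIsometryEquiv hfr
  have hQ : lineMap e φ = Q ∘ WithLp.toLp 2 := rfl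
  have h1 : MeasurePreserving (WithLp.toLp 2 : V × ℝ → WithLp 2 (V × ℝ))
      (volume.prod volume) volume := WithLp.volume_preserving_toLp V ℝ
  rw [hQ]
  refine ⟨Q.measurePreserving.comp h1, ?_⟩
  exact Q.toHomeomorph.measurableEmbedding.comp
    (MeasurableEquiv.toLp 2 (V × ℝ)).measurableEmbedding

end coords

/-! ### Bounds and limit of the rescaled integrand -/

theorem LineBounds.mono {V : Type*} [NormedAddCommGroup V] {A A' β : ℝ} {F : V × ℝ → ℝ}
    (hF : LineBounds A β F) (h : A ≤ A') : LineBounds A' β F where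
  cont := hF.cont
  pt v hv s := (hF.pt v hv s).trans (by gcongr)
  mass v hv := (hF.mass v hv).trans (ENNReal.ofReal_le_ofReal (by gcongr))

section kernel

variable {E V : Type*} [NormedAddCommGroup E] [InnerProductSpace ℝ E]
  [NormedAddCommGroup V] [InnerProductSpace ℝ V]

/-- The integrand of `ā_ε` after integration in `ξ`:
`ε⁻¹ (G(e·z + εW_ε(z)) − G(e·z)) J(z)`. -/
noncomputable def scaledInt (G : ℝ → ℝ) (J d : E → ℝ) (x e : E) (ε : ℝ) (z : E) : ℝ :=
  1 / ε * (G (⟪e, z⟫ + phaseRem d x e ε z) - G ⟪e, z⟫) * J z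

/-- The limit `½ B(z,z) Φ(e·z) J(z)` of the rescaled integrand, `B` being the Hessian of `d`. -/
noncomputable def limitInt (Φ : ℝ → ℝ) (J : E → ℝ) (B : E →L[ℝ] E →L[ℝ] ℝ) (e z : E) : ℝ :=
  1 / 2 * B z z * Φ ⟪e, z⟫ * J z

theorem tendsto_scaledInt {G Φ : ℝ → ℝ} (hG : ∀ s, HasDerivAt G (Φ s) s) (J d : E → ℝ)
    {x e z : E} {B : E →L[ℝ] E →L[ℝ] ℝ}
    (hrem : Tendsto (fun ε => phaseRem d x e ε z / ε) (𝓝[>] 0) (𝓝 (1 / 2 * B z z))) :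
    Tendsto (fun ε => scaledInt G J d x e ε z) (𝓝[>] 0) (𝓝 (limitInt Φ J B e z)) := by
  -- `phaseRem` vanishes at `ε = 0` by the convention `a / 0 = 0`.
  have h0 : phaseRem d x e 0 z = 0 := by simp [phaseRem]
  have hk : HasDerivWithinAt (fun ε => ⟪e, z⟫ + phaseRem d x e ε z) (1 / 2 * B z z)
      (Set.Ioi 0) 0 := by
    rw [hasDerivWithinAt_iff_tendsto_slope' (by simp)]
    refine hrem.congr fun ε => ?_
    simp [slope, h0]
    ring
  have hGk : HasDerivAt G (Φ ⟪e, z⟫) (⟪e, z⟫ + phaseRem d x e 0 z) := by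
    rw [h0, add_zero]; exact hG _
  have := hGk.comp_hasDerivWithinAt (0 : ℝ) hk
  rw [hasDerivWithinAt_iff_tendsto_slope' (by simp)] at this
  have h2 := this.mul_const (J z)
  rw [limitInt, mul_comm (1 / 2 * B z z)]
  refine h2.congr fun ε => ?_
  simp [slope, h0, scaledInt]

variable {e : E} {φ : V →ₗᵢ[ℝ] E}

theorem rpow_shift {a β k : ℝ} (ha : 0 < a) :
    a ^ k * a ^ (-(β + 2)) = a ^ (-(β + 2 - k)) := by
  rw [← Real.rpow_add ha]; congr 1; ring

theorem norm_rpow_lineMap_le (he : ‖e‖ = 1) (hort : ∀ v, ⟪e, φ v⟫ = 0) {β : ℝ} (hβ : 0 ≤ β)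
    {v : V} (hv : v ≠ 0) (s : ℝ) : ‖lineMap e φ (v, s)‖ ^ (-β) ≤ ‖v‖ ^ (-β) :=
  Real.rpow_le_rpow_of_nonpos (norm_pos_iff.2 hv) (norm_le_norm_lineMap he hort v s) (by linarith)

theorem continuous_kernel_line (he : ‖e‖ = 1) (hort : ∀ v, ⟪e, φ v⟫ = 0) {J : E → ℝ}
    (hJ : ContinuousOn J {0}ᶜ) {v : V} (hv : v ≠ 0) :
    Continuous fun s : ℝ => J (lineMap e φ (v, s)) :=
  hJ.comp_continuous (continuous_lineMap.comp (by fun_prop))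
    fun s => lineMap_ne_zero he hort hv s

theorem lintegral_enorm_eq {Φ : ℝ → ℝ} (hΦi : Integrable Φ) :
    ∫⁻ s, ‖Φ s‖ₑ = ENNReal.ofReal (∫ s, ‖Φ s‖) := by
  rw [ofReal_integral_norm_eq_lintegral_enorm hΦi]

theorem lineBounds_limitInt (he : ‖e‖ = 1) (hort : ∀ v, ⟪e, φ v⟫ = 0)
    {Φ : ℝ → ℝ} {J : E → ℝ} {L Cg β : ℝ} (hβ : 1 < β) (hΦ : Continuous Φ)
    (hΦi : Integrable Φ) (hL : ∀ s, |Φ s| ≤ L) (hJ : ContinuousOn J {0}ᶜ) (hCg : 0 ≤ Cg)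
    (hJb : ∀ z, z ≠ 0 → |J z| ≤ Cg * ‖z‖ ^ (-(β + 2))) (B : E →L[ℝ] E →L[ℝ] ℝ) :
    LineBounds (‖B‖ * Cg * (L + ∫ s, ‖Φ s‖)) β
      (fun p : V × ℝ => limitInt Φ J B e (lineMap e φ p)) := by
  have hL0 : 0 ≤ L := (abs_nonneg _).trans (hL 0)
  have hI0 : 0 ≤ ∫ s, ‖Φ s‖ := integral_nonneg fun _ => norm_nonneg _
  have hpt : ∀ v : V, v ≠ 0 → ∀ s : ℝ, |limitInt Φ J B e (lineMap e φ (v, s))| ≤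
      ‖B‖ * Cg * |Φ s| * ‖lineMap e φ (v, s)‖ ^ (-β) := by
    intro v hv s
    have hz := lineMap_ne_zero he hort hv s
    rw [limitInt, inner_lineMap he hort]
    set z := lineMap e φ (v, s)
    have hB : |B z z| ≤ ‖B‖ * ‖z‖ * ‖z‖ := B.le_opNorm₂ z z
    have h2 := rpow_shift (β := β) (k := 2) (norm_pos_iff.2 hz)
    rw [Real.rpow_two, add_sub_cancel_right] at h2
    rw [abs_mul, abs_mul, abs_mul, ← h2]
    calc |1 / 2| * |B z z| * |Φ s| * |J z|
        ≤ 1 * (‖B‖ * ‖z‖ * ‖z‖) * |Φ s| * (Cg * ‖z‖ ^ (-(β + 2))) := by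
          gcongr
          · rw [abs_of_pos] <;> norm_num
          · exact hJb z hz
      _ = _ := by ring
  refine ⟨fun v hv => ?_, fun v hv s => ?_, fun v hv => ?_⟩
  · have h1 := continuous_kernel_line he hort hJ hv
    have h2 : Continuous fun s : ℝ => lineMap e φ (v, s) :=
      continuous_lineMap.comp (by fun_prop)
    unfold limitInt
    exact Continuous.mul (by fun_prop) h1
  · refine (hpt v hv s).trans ?_
    rw [norm_rpow_lineMap he hort]
    gcongr
    linarith [hL s]
  · calc ∫⁻ s : ℝ, ‖limitInt Φ J B e (lineMap e φ (v, s))‖ₑ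
        ≤ ∫⁻ s : ℝ, ENNReal.ofReal (‖B‖ * Cg * ‖v‖ ^ (-β)) * ‖Φ s‖ₑ := by
          refine lintegral_mono fun s => ?_
          rw [← ofReal_norm, ← ofReal_norm, ← ENNReal.ofReal_mul (by positivity)]
          refine ENNReal.ofReal_le_ofReal ((hpt v hv s).trans ?_)
          have := norm_rpow_lineMap_le he hort (by linarith : 0 ≤ β) hv s
          calc _ ≤ ‖B‖ * Cg * |Φ s| * ‖v‖ ^ (-β) := by gcongr
            _ = _ := by rw [Real.norm_eq_abs]; ring
      _ = ENNReal.ofReal (‖B‖ * Cg * ‖v‖ ^ (-β) * ∫ s, ‖Φ s‖) := by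
          rw [lintegral_const_mul' _ _ (by simp), lintegral_enorm_eq hΦi,
            ← ENNReal.ofReal_mul (by positivity)]
      _ ≤ _ := by
          refine ENNReal.ofReal_le_ofReal ?_
          have : 0 ≤ ‖B‖ * Cg * ‖v‖ ^ (-β) * L := by positivity
          nlinarith

/-- The uniform bounds on the rescaled integrand. The constant does not depend on `ε`: the part of
the line with `ε|z| < r` contributes the term with `∫ ‖Φ‖`, the rest the term with `M / r`. -/
theorem lineBounds_scaledInt (he : ‖e‖ = 1) (hort : ∀ v, ⟪e, φ v⟫ = 0)
    {G Φ : ℝ → ℝ} {J d : E → ℝ} {x : E} {L M Cg C r β ε : ℝ} (hβ : 1 < β) (hΦ : Continuous Φ)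
    (hG : ∀ s, HasDerivAt G (Φ s) s) (hM : ∀ s, |G s| ≤ M)
    (hΦi : Integrable Φ) (hL : ∀ s, |Φ s| ≤ L) (hJ : ContinuousOn J {0}ᶜ) (hCg : 0 ≤ Cg)
    (hJb : ∀ z, z ≠ 0 → |J z| ≤ Cg * ‖z‖ ^ (-(β + 2))) (hd : Continuous d)
    (hpc : PhaseControl d x e r C) (hε : 0 < ε) :
    LineBounds (C * Cg * (L + 2 * ∫ s, ‖Φ s‖) + 2 * M * Cg / r * lineConst (β + 1)) β
      (fun p : V × ℝ => scaledInt G J d x e ε (lineMap e φ p)) := by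
  have hL0 : 0 ≤ L := (abs_nonneg _).trans (hL 0)
  have hM0 : 0 ≤ M := (abs_nonneg _).trans (hM 0)
  have hI0 : 0 ≤ ∫ s, ‖Φ s‖ := integral_nonneg fun _ => norm_nonneg _
  have hc0 := lineConst_nonneg (β + 1)
  have hr := hpc.r_pos
  have hC := hpc.C_pos
  have hGc : Continuous G := continuous_iff_continuousAt.2 fun s => (hG s).continuousAt
  have hremc := continuous_phaseRem hd x e ε
  have hGlip : ∀ s h, |G (s + h) - G s| ≤ L * |h| := by
    intro s h
    have := Convex.norm_image_sub_le_of_norm_hasDerivWithin_le (s := Set.univ) (C := L)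
      (f := G) (f' := Φ) (x := s) (y := s + h) (fun y _ => (hG y).hasDerivWithinAt)
      (fun y _ => hL y) convex_univ trivial trivial
    simpa using this
  -- `ε⁻¹ |εW_ε(z)| |J(z)| ≤ C Cg |z|^{-β}`
  have hW : ∀ v : V, v ≠ 0 → ∀ s : ℝ,
      |1 / ε * J (lineMap e φ (v, s)) * phaseRem d x e ε (lineMap e φ (v, s))| ≤
      C * Cg * ‖lineMap e φ (v, s)‖ ^ (-β) := by
    intro v hv s
    have hz := lineMap_ne_zero he hort hv s
    set z := lineMap e φ (v, s)
    have h2 := rpow_shift (β := β) (k := 2) (norm_pos_iff.2 hz)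
    rw [Real.rpow_two, add_sub_cancel_right] at h2
    rw [abs_mul, abs_mul, abs_of_pos (one_div_pos.2 hε), ← h2]
    calc 1 / ε * |J z| * |phaseRem d x e ε z|
        ≤ 1 / ε * (Cg * ‖z‖ ^ (-(β + 2))) * (C * ε * ‖z‖ ^ 2) := by
          gcongr
          · exact hJb z hz
          · exact hpc.quad ε hε z
      _ = _ := by field_simp
  refine ⟨fun v hv => ?_, fun v hv s => ?_, fun v hv => ?_⟩
  · have h1 := continuous_kernel_line he hort hJ hv
    have h2 : Continuous fun s : ℝ => lineMap e φ (v, s) :=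
      continuous_lineMap.comp (by fun_prop)
    unfold scaledInt
    exact Continuous.mul (by fun_prop) h1
  · have h1 := hW v hv s
    rw [norm_rpow_lineMap he hort] at h1
    rw [scaledInt]
    set z := lineMap e φ (v, s)
    calc _ = |1 / ε * J z| * |G (⟪e, z⟫ + phaseRem d x e ε z) - G ⟪e, z⟫| := by
          rw [← abs_mul]; congr 1; ring
      _ ≤ |1 / ε * J z| * (L * |phaseRem d x e ε z|) := by gcongr; exact hGlip _ _
      _ = L * |1 / ε * J z * phaseRem d x e ε z| := by rw [abs_mul (1 / ε * J z)]; ring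
      _ ≤ L * (C * Cg * (s ^ 2 + ‖v‖ ^ 2) ^ (-β / 2)) := by gcongr
      _ = C * Cg * L * (s ^ 2 + ‖v‖ ^ 2) ^ (-β / 2) := by ring
      _ ≤ _ := by
          gcongr
          have h3 : 0 ≤ C * Cg * (2 * ∫ s, ‖Φ s‖) := by positivity
          have h4 : 0 ≤ 2 * M * Cg / r * lineConst (β + 1) := by positivity
          linarith
  · have hv' := norm_pos_iff.2 hv
    have hzc : Continuous fun s : ℝ => lineMap e φ (v, s) :=
      continuous_lineMap.comp (by fun_prop)
    set S : Set ℝ := {s | ‖ε • lineMap e φ (v, s)‖ < r} with hS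
    have hSm : MeasurableSet S := (isOpen_lt (by fun_prop) continuous_const).measurableSet
    have hsub : ∀ s s', lineMap e φ (v, s) - lineMap e φ (v, s') = (s - s') • e := by
      intro s s'; simp [lineMap, sub_smul]
    have hnear : ∫⁻ s in S, ‖scaledInt G J d x e ε (lineMap e φ (v, s))‖ₑ ≤
        ENNReal.ofReal (C * Cg * ‖v‖ ^ (-β) * (2 * ∫ s, ‖Φ s‖)) := by
      have hex : ∀ s : ℝ, ∃ D : ℝ, s ∈ S → |D| ≤ 1 / 2 ∧
          HasDerivAt (fun s => phaseRem d x e ε (lineMap e φ (v, s))) D s := by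
        intro s
        by_cases hs : s ∈ S
        · obtain ⟨D, hD, hD'⟩ := hpc.deriv ε hε _ hs
          refine ⟨D e, fun _ => ⟨?_, ?_⟩⟩
          · have := D.le_opNorm e
            rw [he, mul_one] at this
            exact this.trans hD
          · have hl : HasDerivAt (fun s : ℝ => lineMap e φ (v, s)) e s := by
              exact (((hasDerivAt_id s).smul_const e).add_const (φ v)).congr_deriv (by simp)
            exact hD'.comp_hasDerivAt s hl
        · exact ⟨0, fun h => absurd h hs⟩
      choose η' hη' using hex
      have hsh := lintegral_shear_le (Φ := Φ)
        (η := fun s => phaseRem d x e ε (lineMap e φ (v, s))) (η' := η') (S := S) hΦ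
        (hremc.comp hzc) hSm (fun s hs => (hη' s hs).2) (fun s hs => (hη' s hs).1)
        (fun s hs s' hs' => by
          have := hpc.lip ε hε _ _ hs hs'
          rwa [hsub, norm_smul, he, mul_one, Real.norm_eq_abs] at this)
      calc ∫⁻ s in S, ‖scaledInt G J d x e ε (lineMap e φ (v, s))‖ₑ
          ≤ ∫⁻ s in S, ENNReal.ofReal (C * Cg * ‖v‖ ^ (-β)) * ∫⁻ t in Set.Ioc (0 : ℝ) 1,
              ‖Φ (s + t * phaseRem d x e ε (lineMap e φ (v, s)))‖ₑ := by
            refine lintegral_mono fun s => ?_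
            have h1 := enorm_sub_le_of_hasDerivAt hΦ hG s
              (phaseRem d x e ε (lineMap e φ (v, s)))
            have h2 := hW v hv s
            have h3 := norm_rpow_lineMap_le he hort (by linarith : 0 ≤ β) hv s
            rw [scaledInt, inner_lineMap he hort]
            set z := lineMap e φ (v, s)
            rw [mul_right_comm, enorm_mul]
            refine (mul_le_mul_right h1 _).trans ?_
            rw [← mul_assoc, ← enorm_mul]
            refine mul_le_mul_left ?_ _
            rw [← ofReal_norm]
            refine ENNReal.ofReal_le_ofReal (h2.trans ?_)
            gcongr
        _ = ENNReal.ofReal (C * Cg * ‖v‖ ^ (-β)) * ∫⁻ s in S, ∫⁻ t in Set.Ioc (0 : ℝ) 1,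
              ‖Φ (s + t * phaseRem d x e ε (lineMap e φ (v, s)))‖ₑ :=
            lintegral_const_mul' _ _ (by simp)
        _ ≤ ENNReal.ofReal (C * Cg * ‖v‖ ^ (-β)) * (2 * ∫⁻ s, ‖Φ s‖ₑ) := by gcongr
        _ = _ := by
            rw [lintegral_enorm_eq hΦi, show (2 : ENNReal) = ENNReal.ofReal 2 by simp,
              ← ENNReal.ofReal_mul (by norm_num), ← ENNReal.ofReal_mul (by positivity)]
    have hfar : ∫⁻ s in Sᶜ, ‖scaledInt G J d x e ε (lineMap e φ (v, s))‖ₑ ≤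
        ENNReal.ofReal (2 * M * Cg / r * lineConst (β + 1) * ‖v‖ ^ (-β)) := by
      calc ∫⁻ s in Sᶜ, ‖scaledInt G J d x e ε (lineMap e φ (v, s))‖ₑ
          ≤ ∫⁻ s in Sᶜ, ENNReal.ofReal
              (2 * M * Cg / r * (s ^ 2 + ‖v‖ ^ 2) ^ (-(β + 1) / 2)) := by
            refine setLIntegral_mono' hSm.compl fun s hs => ?_
            have hz := lineMap_ne_zero he hort hv s
            have hs' : r ≤ ‖ε • lineMap e φ (v, s)‖ := not_lt.1 hs
            rw [← norm_rpow_lineMap he hort, scaledInt]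
            set z := lineMap e φ (v, s)
            rw [norm_smul, Real.norm_of_nonneg hε.le] at hs'
            rw [← ofReal_norm, Real.norm_eq_abs]
            refine ENNReal.ofReal_le_ofReal ?_
            have h2 := rpow_shift (β := β) (k := 1) (norm_pos_iff.2 hz)
            rw [Real.rpow_one, show β + 2 - 1 = β + 1 by ring] at h2
            have h3 : 1 / ε ≤ ‖z‖ / r := by
              rw [div_le_div_iff₀ hε hr]; linarith
            have h4 : |G (⟪e, z⟫ + phaseRem d x e ε z) - G ⟪e, z⟫| ≤ 2 * M :=
              (abs_sub _ _).trans (by linarith [hM (⟪e, z⟫ + phaseRem d x e ε z), hM ⟪e, z⟫])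
            rw [abs_mul, abs_mul, abs_of_pos (one_div_pos.2 hε), ← h2]
            calc _ ≤ ‖z‖ / r * (2 * M) * (Cg * ‖z‖ ^ (-(β + 2))) := by
                  gcongr
                  exact hJb z hz
              _ = _ := by ring
        _ ≤ ∫⁻ s : ℝ, ENNReal.ofReal
              (2 * M * Cg / r * (s ^ 2 + ‖v‖ ^ 2) ^ (-(β + 1) / 2)) :=
            setLIntegral_le_lintegral _ _
        _ = _ := by
            rw [← ofReal_integral_eq_lintegral_ofReal
              ((integrable_line (by linarith) hv').const_mul _)
              (.of_forall fun s => by positivity), integral_const_mul, integral_line hv',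
              mul_assoc _ (lineConst (β + 1))]
            congr 4; ring
    rw [← lintegral_add_compl _ hSm]
    refine (add_le_add hnear hfar).trans ?_
    rw [← ENNReal.ofReal_add (by positivity) (by positivity)]
    refine ENNReal.ofReal_le_ofReal ?_
    have : 0 ≤ C * Cg * ‖v‖ ^ (-β) * L := by positivity
    nlinarith

end kernel

/-! ### Evaluation of the limit -/

section evaluation

variable {E V : Type*} [NormedAddCommGroup E] [InnerProductSpace ℝ E]
  [NormedAddCommGroup V] [InnerProductSpace ℝ V]
  [FiniteDimensional ℝ V] [MeasurableSpace V] [BorelSpace V]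
  {e : E} {φ : V →ₗᵢ[ℝ] E}

/-- Slicing by hyperplanes `e·z = s` and scaling each slice by `s` separates the variables. -/
theorem integral_limitInt (he : ‖e‖ = 1) (hort : ∀ v, ⟪e, φ v⟫ = 0) {Φ : ℝ → ℝ} {J : E → ℝ}
    {α : ℝ} (hJhom : ∀ s : ℝ, s ≠ 0 → ∀ y : E, y ≠ 0 →
      J (s • y) = |s| ^ (-((Module.finrank ℝ V : ℝ) + 1 + α)) * J y)
    (B : E →L[ℝ] E →L[ℝ] ℝ)
    (hInt : Integrable (fun p : V × ℝ => limitInt Φ J B e (lineMap e φ p))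
      (volume.prod volume)) :
    ∫ p : V × ℝ, limitInt Φ J B e (lineMap e φ p) ∂(volume.prod volume) =
      1 / 2 * (∫ s, Φ s * |s| ^ (1 - α)) *
        ∫ u : V, B (e + φ u) (e + φ u) * J (e + φ u) := by
  rw [integral_prod_symm _ hInt]
  have key : ∀ s : ℝ, s ≠ 0 → ∫ v : V, limitInt Φ J B e (lineMap e φ (v, s)) =
      (Φ s * |s| ^ (1 - α)) * (1 / 2 * ∫ u : V, B (e + φ u) (e + φ u) * J (e + φ u)) := by
    intro s hs
    have hs' : 0 < |s| := abs_pos.2 hs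
    have h1 := Measure.integral_comp_smul (volume : Measure V)
      (fun v => limitInt Φ J B e (lineMap e φ (v, s))) s
    have h2 : ∀ u : V, limitInt Φ J B e (lineMap e φ (s • u, s)) =
        (1 / 2 * s ^ 2 * Φ s * |s| ^ (-((Module.finrank ℝ V : ℝ) + 1 + α))) *
          (B (e + φ u) (e + φ u) * J (e + φ u)) := by
      intro u
      have hy : lineMap e φ (u, 1) = e + φ u := by simp [lineMap]
      have hy0 : e + φ u ≠ 0 := by
        intro h
        have := norm_sq_lineMap he hort u 1
        rw [hy, h] at this
        simp at this
        nlinarith [sq_nonneg ‖u‖]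
      rw [limitInt, inner_lineMap he hort, lineMap_smul, hy, hJhom s hs _ hy0]
      simp only [map_smul, smul_eq_mul, FunLike.coe_smul, Pi.smul_apply]
      ring
    simp_rw [h2] at h1
    rw [integral_const_mul, abs_inv, abs_pow, smul_eq_mul, eq_inv_mul_iff_mul_eq₀ (by positivity)]
      at h1
    rw [← h1]
    have h3 : |s| ^ (1 - α) =
        |s| ^ Module.finrank ℝ V * s ^ 2 * |s| ^ (-((Module.finrank ℝ V : ℝ) + 1 + α)) := by
      rw [← sq_abs s, ← Real.rpow_natCast, ← Real.rpow_natCast, ← Real.rpow_add hs',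
        ← Real.rpow_add hs']
      congr 1
      push_cast; ring
    rw [h3]
    ring
  have hae : ∀ᵐ s : ℝ, s ≠ 0 := Measure.ae_ne volume 0
  rw [integral_congr_ae (hae.mono fun s hs => key s hs), integral_mul_const]
  ring

end evaluation

theorem trace_mul_hessian {N : ℕ} {V : Type*} [MeasurableSpace V] {μ : Measure V}
    (y : V → EuclideanSpace ℝ (Fin N)) (w : V → ℝ)
    (B : EuclideanSpace ℝ (Fin N) →L[ℝ] EuclideanSpace ℝ (Fin N) →L[ℝ] ℝ)
    (hInt : ∀ i j, Integrable (fun u => y u i * y u j * w u) μ) :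
    Matrix.trace ((Matrix.of fun i j : Fin N => ∫ u, y u i * y u j * w u ∂μ) *
      (Matrix.of fun i j : Fin N =>
        B (EuclideanSpace.single i 1) (EuclideanSpace.single j 1))) =
      ∫ u, B (y u) (y u) * w u ∂μ := by
  have hB : ∀ u, B (y u) (y u) * w u = ∑ i, ∑ j, y u i * y u j * w u *
      B (EuclideanSpace.single j 1) (EuclideanSpace.single i 1) := by
    intro u
    have hy : y u = ∑ i, y u i • EuclideanSpace.single i (1 : ℝ) := by
      have := (EuclideanSpace.basisFun (Fin N) ℝ).sum_repr (y u)
      simpa using this.symm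
    conv_lhs => rw [hy]
    simp only [map_sum, map_smul, sum_apply, FunLike.coe_smul,
      Pi.smul_apply, smul_eq_mul, Finset.sum_mul, Finset.mul_sum]
    refine Finset.sum_congr rfl fun i _ => Finset.sum_congr rfl fun j _ => ?_
    ring
  simp_rw [hB]
  rw [integral_finsetSum _ fun i _ => integrable_finsetSum _ fun j _ =>
    (hInt i j).mul_const _]
  simp only [Matrix.trace, Matrix.diag_apply, Matrix.mul_apply, Matrix.of_apply]
  refine Finset.sum_congr rfl fun i _ => ?_
  rw [integral_finsetSum _ fun j _ => (hInt i j).mul_const _]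
  simp_rw [integral_mul_const]

/-! ### The kernel -/

section homogeneous

variable {E : Type*} [NormedAddCommGroup E] [InnerProductSpace ℝ E]

theorem unit_mem_sphere {z : E} (hz : z ≠ 0) : ‖z‖⁻¹ • z ∈ sphere (0 : E) 1 := by
  simp [norm_smul, norm_ne_zero_iff.2 hz]

variable {g J : E → ℝ} {γ : ℝ}

theorem continuousOn_kernel (hg : ContinuousOn g (sphere (0 : E) 1))
    (hJ : ∀ z : E, z ≠ 0 → J z = g (‖z‖⁻¹ • z) * ‖z‖ ^ (-γ)) : ContinuousOn J {0}ᶜ := by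
  have hn : ∀ z ∈ ({0}ᶜ : Set E), ‖z‖ ≠ 0 := fun z hz => norm_ne_zero_iff.2 hz
  have h1 : ContinuousOn (fun z : E => g (‖z‖⁻¹ • z)) {0}ᶜ :=
    hg.comp ((continuous_norm.continuousOn.inv₀ hn).smul continuousOn_id)
      fun z hz => unit_mem_sphere hz
  have h2 : ContinuousOn (fun z : E => ‖z‖ ^ (-γ)) {0}ᶜ :=
    continuous_norm.continuousOn.rpow_const fun z hz => Or.inl (hn z hz)
  exact (h1.mul h2).congr fun z hz => hJ z hz

theorem kernel_homogeneous (hg_even : ∀ θ ∈ sphere (0 : E) 1, g (-θ) = g θ)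
    (hJ : ∀ z : E, z ≠ 0 → J z = g (‖z‖⁻¹ • z) * ‖z‖ ^ (-γ)) (s : ℝ) (hs : s ≠ 0) (y : E)
    (hy : y ≠ 0) : J (s • y) = |s| ^ (-γ) * J y := by
  rw [hJ _ (smul_ne_zero hs hy), hJ _ hy, norm_smul, Real.norm_eq_abs,
    Real.mul_rpow (abs_nonneg _) (norm_nonneg _)]
  have : g ((|s| * ‖y‖)⁻¹ • s • y) = g (‖y‖⁻¹ • y) := by
    rcases lt_or_gt_of_ne hs with h | h
    · rw [← hg_even _ (unit_mem_sphere hy), abs_of_neg h, smul_smul, ← neg_smul]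
      congr 2
      field_simp
    · rw [abs_of_pos h, smul_smul]
      congr 2
      field_simp
  rw [this]; ring

theorem exists_kernel_bound [FiniteDimensional ℝ E] (hg : ContinuousOn g (sphere (0 : E) 1)) :
    ∃ Cg, 0 ≤ Cg ∧ ∀ θ ∈ sphere (0 : E) 1, |g θ| ≤ Cg := by
  obtain ⟨C, hC⟩ := (isCompact_sphere (0 : E) 1).exists_bound_of_continuousOn hg
  exact ⟨|C|, abs_nonneg _, fun θ hθ => (hC θ hθ).trans (le_abs_self _)⟩

end homogeneous

/-! ### Reduction of the double integral -/

section reduction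

variable {E : Type*} [NormedAddCommGroup E] [InnerProductSpace ℝ E] [FiniteDimensional ℝ E]
  [MeasurableSpace E] [BorelSpace E]

theorem aestronglyMeasurable_of_continuousOn_compl [Nontrivial E] {J : E → ℝ}
    (hJ : ContinuousOn J {0}ᶜ) : AEStronglyMeasurable J volume := by
  have h := hJ.aestronglyMeasurable (μ := volume) (measurableSet_singleton (0 : E)).compl
  have hae : ∀ᵐ z : E ∂volume, z ∈ ({0}ᶜ : Set E) := Measure.ae_ne volume (0 : E)
  rwa [Measure.restrict_eq_self_of_ae_mem hae] at h

/-- Integrating in `ξ` first turns the double integral into that of `scaledInt`; the sign of the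
integrand does not depend on `ξ`, so absolute convergence is inherited too. -/
theorem integrable_full {q : ℝ → ℝ} {Bq : ℝ} (hq : ContDiff ℝ 1 q) (hq_mono : Monotone q)
    (hqi : Integrable (deriv q)) (hBq : ∀ r, |q r| ≤ Bq) {d J : E → ℝ} {x e : E}
    (hd : Continuous d) (hJm : AEStronglyMeasurable J volume) {ε : ℝ} (hε : 0 < ε)
    (hI : Integrable (scaledInt (slopePrim q) J d x e ε) volume) :
    Integrable (fun p : E × ℝ => deriv q p.2 * (q (p.2 + ⟪e, p.1⟫ +
        ε * ((d (x + ε • p.1) - d x - ε * ⟪e, p.1⟫) / ε ^ 2)) - q (p.2 + ⟪e, p.1⟫)) * J p.1) ∧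
    (1 / ε) * ∫ p : E × ℝ, deriv q p.2 * (q (p.2 + ⟪e, p.1⟫ +
        ε * ((d (x + ε • p.1) - d x - ε * ⟪e, p.1⟫) / ε ^ 2)) - q (p.2 + ⟪e, p.1⟫)) * J p.1 =
      ∫ z, scaledInt (slopePrim q) J d x e ε z := by
  simp_rw [phaseRem_eq d x e hε]
  have hqc := hq.continuous
  have hqc' := hq.continuous_deriv le_rfl
  have hrem := continuous_phaseRem hd x e ε
  have hm : AEStronglyMeasurable (fun p : E × ℝ => deriv q p.2 * (q (p.2 + ⟪e, p.1⟫ +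
      phaseRem d x e ε p.1) - q (p.2 + ⟪e, p.1⟫)) * J p.1) (volume.prod volume) :=
    (Continuous.aestronglyMeasurable (by fun_prop)).mul hJm.comp_fst
  have hInt : Integrable (fun p : E × ℝ => deriv q p.2 * (q (p.2 + ⟪e, p.1⟫ +
      phaseRem d x e ε p.1) - q (p.2 + ⟪e, p.1⟫)) * J p.1) (volume.prod volume) := by
    rw [integrable_prod_iff hm]
    refine ⟨.of_forall fun z => ?_, ?_⟩
    · have h1 := integrable_deriv_mul_shift hq hqi hBq (⟪e, z⟫ + phaseRem d x e ε z)
      have h2 := integrable_deriv_mul_shift hq hqi hBq ⟪e, z⟫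
      simpa only [mul_sub, add_assoc, Pi.sub_apply] using (h1.sub h2).mul_const (J z)
    · refine (hI.norm.const_mul ε).congr (.of_forall fun z => ?_)
      simp only [norm_mul _ (J z)]
      rw [integral_mul_const, integral_norm_slope_mul_sub hq hq_mono hqi hBq, scaledInt,
        norm_mul, norm_mul, Real.norm_of_nonneg (one_div_pos.2 hε).le, Real.norm_eq_abs (_ - _)]
      field_simp
  refine ⟨hInt, ?_⟩
  have hprod := integral_prod _ hInt
  rw [Measure.volume_eq_prod, hprod, ← integral_const_mul]
  refine integral_congr_ae (.of_forall fun z => ?_)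
  simp only
  rw [integral_mul_const, integral_slope_mul_sub hq hqi hBq, scaledInt, mul_assoc]

end reduction

/-- **Convergence of the averaged oscillating coefficient: singular kernel case `α ∈ (1,2)`.**
For the kernel `J(z) = g(z/|z|)|z|^{-(N+α)}`, a `C¹` nondecreasing wave `q` with limits
`mminus`, `mplus` and slope decay `q'(r) ≤ C_q (1+|r|)^{-(2+α)}`, and a `1`-Lipschitz phase
`d`, `C²` near `x` with `|Dd| = 1` there, setting `e = ∇d(x)` and
`W_ε(z) = (d(x+εz) − d(x) − ε e·z)/ε²`, the quantity
`ā_ε = (1/ε) ∬ q'(ξ)[q(ξ + e·z + εW_ε(z)) − q(ξ + e·z)] dξ J(z) dz`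
is absolutely convergent for all small `ε > 0` and converges, as `ε → 0⁺`, to
`(1/2) (∫ Φ(s)|s|^{1−α} ds) · tr(M_g(e) D²d(x))`, where `Φ(s) = ∫ q'(ξ)q'(ξ+s) dξ` (the
weighted integral of `Φ` being finite) and
`M_g(e) = ∫_{e^⊥} ((e+u)⊗(e+u)) g((e+u)/|e+u|) (1+|u|²)^{-(N+α)/2} du`, the hyperplane
`e^⊥ ≅ ℝ^{N-1}` being parametrized by a linear isometry `φ`. -/
theorem stmt_15 (N : ℕ) (hN : 2 ≤ N) (α : ℝ) (hα1 : 1 < α) (hα2 : α < 2)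
    (g : EuclideanSpace ℝ (Fin N) → ℝ)
    (hg_cont : ContinuousOn g (sphere (0 : EuclideanSpace ℝ (Fin N)) 1))
    (hg_pos : ∀ θ ∈ sphere (0 : EuclideanSpace ℝ (Fin N)) 1, 0 < g θ)
    (hg_even : ∀ θ ∈ sphere (0 : EuclideanSpace ℝ (Fin N)) 1, g (-θ) = g θ)
    (J : EuclideanSpace ℝ (Fin N) → ℝ)
    (hJ : ∀ z : EuclideanSpace ℝ (Fin N), z ≠ 0 →
      J z = g (‖z‖⁻¹ • z) * ‖z‖ ^ (-((N : ℝ) + α)))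
    (q : ℝ → ℝ) (hq : ContDiff ℝ 1 q) (hq_mono : Monotone q)
    (mminus mplus : ℝ)
    (hbot : Tendsto q atBot (𝓝 mminus)) (htop : Tendsto q atTop (𝓝 mplus))
    (C_q : ℝ) (hCq : 0 < C_q)
    (hdecay : ∀ r : ℝ, deriv q r ≤ C_q * (1 + |r|) ^ (-(2 + α)))
    (d : EuclideanSpace ℝ (Fin N) → ℝ) (hd_lip : LipschitzWith 1 d)
    (x : EuclideanSpace ℝ (Fin N)) (U : Set (EuclideanSpace ℝ (Fin N)))
    (hU : IsOpen U) (hxU : x ∈ U) (hdU : ContDiffOn ℝ 2 d U)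
    (hgrad : ∀ y ∈ U, ‖gradient d y‖ = 1)
    (e : EuclideanSpace ℝ (Fin N)) (he : e = gradient d x)
    (φ : EuclideanSpace ℝ (Fin (N - 1)) →ₗᵢ[ℝ] EuclideanSpace ℝ (Fin N))
    (hφ : LinearMap.range φ.toLinearMap = (ℝ ∙ e)ᗮ) :
    (∃ ε₀ : ℝ, 0 < ε₀ ∧ ∀ ε ∈ Set.Ioo (0 : ℝ) ε₀,
      Integrable (fun p : EuclideanSpace ℝ (Fin N) × ℝ =>
        deriv q p.2 *
          (q (p.2 + ⟪e, p.1⟫ +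
              ε * ((d (x + ε • p.1) - d x - ε * ⟪e, p.1⟫) / ε ^ 2)) -
            q (p.2 + ⟪e, p.1⟫)) * J p.1)) ∧
    Integrable (fun s : ℝ =>
      (∫ ξ : ℝ, deriv q ξ * deriv q (ξ + s)) * |s| ^ (1 - α)) ∧
    Tendsto (fun ε : ℝ =>
        (1 / ε) * ∫ p : EuclideanSpace ℝ (Fin N) × ℝ,
          deriv q p.2 *
            (q (p.2 + ⟪e, p.1⟫ +
                ε * ((d (x + ε • p.1) - d x - ε * ⟪e, p.1⟫) / ε ^ 2)) -
              q (p.2 + ⟪e, p.1⟫)) * J p.1)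
      (𝓝[>] (0 : ℝ))
      (𝓝 ((1 / 2) *
        (∫ s : ℝ, (∫ ξ : ℝ, deriv q ξ * deriv q (ξ + s)) * |s| ^ (1 - α)) *
        Matrix.trace
          ((Matrix.of fun i j : Fin N =>
              ∫ u : EuclideanSpace ℝ (Fin (N - 1)),
                (e + φ u) i * (e + φ u) j *
                  (g (‖e + φ u‖⁻¹ • (e + φ u)) * (1 + ‖u‖ ^ 2) ^ (-((N : ℝ) + α) / 2))) *
            (Matrix.of fun i j : Fin N =>
              fderiv ℝ (fderiv ℝ d) x (EuclideanSpace.single i 1)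
                (EuclideanSpace.single j 1))))) := by
  classical
  have he1 : ‖e‖ = 1 := he ▸ hgrad x hxU
  have hin : innerSL ℝ e = fderiv ℝ d x := by
    ext z
    rw [he]
    simp [gradient, InnerProductSpace.toDual_symm_apply]
  have hort : ∀ v, ⟪e, φ v⟫ = 0 := fun v => by
    have : φ v ∈ (ℝ ∙ e)ᗮ := hφ ▸ LinearMap.mem_range_self φ.toLinearMap v
    exact Submodule.mem_orthogonal_singleton_iff_inner_right.1 this
  have hN1 : 1 ≤ N := by omega
  have : Nonempty (Fin (N - 1)) := ⟨⟨0, by omega⟩⟩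
  have hfV : Module.finrank ℝ (EuclideanSpace ℝ (Fin (N - 1))) = N - 1 := by simp
  have hfV' : (Module.finrank ℝ (EuclideanSpace ℝ (Fin (N - 1))) : ℝ) = N - 1 := by
    rw [hfV]; push_cast [hN1]; ring
  have hrank : Module.finrank ℝ (EuclideanSpace ℝ (Fin N)) =
      Module.finrank ℝ (EuclideanSpace ℝ (Fin (N - 1))) + 1 := by
    rw [hfV]; simp; omega
  have : Nontrivial (EuclideanSpace ℝ (Fin (N - 1))) :=
    Module.nontrivial_of_finrank_pos (R := ℝ) (by omega)
  have hN2 : (2 : ℝ) ≤ N := by exact_mod_cast hN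
  have : Nontrivial (EuclideanSpace ℝ (Fin N)) :=
    Module.nontrivial_of_finrank_pos (R := ℝ) (by omega)
  -- `β` is the exponent governing the bounds: `|z|² J(z) = O(|z|^{-β})`
  obtain ⟨β, hβ⟩ : ∃ β : ℝ, β = N + α - 2 := ⟨_, rfl⟩
  have hβ2 : (N : ℝ) + α = β + 2 := by linarith
  have hβ1 : 1 < β := by linarith
  have hb1 : (Module.finrank ℝ (EuclideanSpace ℝ (Fin (N - 1))) : ℝ) < β := by linarith
  have hb2 : β < (Module.finrank ℝ (EuclideanSpace ℝ (Fin (N - 1))) : ℝ) + 1 := by linarith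
  obtain ⟨Bq, hBq0, hBq⟩ := exists_abs_bound_of_mono hq_mono hbot htop
  have hqi := integrable_deriv_of_decay hq hq_mono hα1 hdecay
  have hK := deriv_le_of_decay hCq hα1 hdecay
  have hΦc := continuous_slopeCorr hq hq_mono hqi hK
  have hΦi := integrable_slopeCorr hq hqi
  have hΦL : ∀ s, |slopeCorr q s| ≤ (∫ ξ, deriv q ξ) * C_q := fun s => by
    rw [abs_of_nonneg (slopeCorr_nonneg hq_mono s)]
    exact slopeCorr_le hq hq_mono hqi hK s
  have hG := hasDerivAt_slopePrim hq hq_mono hqi hBq hK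
  have hGM := abs_slopePrim_le hq_mono hqi hBq
  have hJc := continuousOn_kernel hg_cont hJ
  obtain ⟨Cg, hCg0, hCg⟩ := exists_kernel_bound hg_cont
  have hJb : ∀ z, z ≠ 0 → |J z| ≤ Cg * ‖z‖ ^ (-(β + 2)) := fun z hz => by
    rw [hJ z hz, abs_mul, abs_of_nonneg (Real.rpow_nonneg (norm_nonneg z) _), ← hβ2]
    gcongr
    exact hCg _ (unit_mem_sphere hz)
  have hJm : AEStronglyMeasurable J volume := aestronglyMeasurable_of_continuousOn_compl hJc
  obtain ⟨r, C, hpc⟩ := exists_phaseControl hd_lip hU hxU hdU he1 hin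
  set B := fderiv ℝ (fderiv ℝ d) x with hB
  obtain ⟨hMP, hME⟩ := exists_measurePreserving_lineMap (φ := φ) he1 hort hrank
  have hF0 := lineBounds_limitInt (φ := φ) he1 hort hβ1 hΦc hΦi hΦL hJc hCg0 hJb B
  have hF := fun (ε : ℝ) (hε : 0 < ε) => lineBounds_scaledInt (φ := φ) he1 hort hβ1 hΦc hG hGM
    hΦi hΦL hJc hCg0 hJb hd_lip.continuous hpc hε
  -- both families of bounds are brought to the common constant `max (max A0 A1) 0`
  set A0 := ‖B‖ * Cg * ((∫ ξ, deriv q ξ) * C_q + ∫ s, ‖slopeCorr q s‖)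
  set A1 := C * Cg * ((∫ ξ, deriv q ξ) * C_q + 2 * ∫ s, ‖slopeCorr q s‖) +
    2 * ((∫ ξ, deriv q ξ) * Bq) * Cg / r * lineConst (β + 1)
  have hA : (0 : ℝ) ≤ max (max A0 A1) 0 := le_max_right _ _
  have hF0' := hF0.mono (A' := max (max A0 A1) 0)
    ((le_max_left A0 A1).trans (le_max_left _ _))
  have hF' := fun (ε : ℝ) (hε : 0 < ε) => (hF ε hε).mono (A' := max (max A0 A1) 0)
    ((le_max_right A0 A1).trans (le_max_left _ _))
  have hGc : Continuous (slopePrim q) :=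
    continuous_iff_continuousAt.2 fun s => (hG s).continuousAt
  have hm : ∀ ε, AEStronglyMeasurable (scaledInt (slopePrim q) J d x e ε) volume := fun ε => by
    have := continuous_phaseRem hd_lip.continuous x e ε
    exact (Continuous.aestronglyMeasurable (by fun_prop)).mul hJm
  have hm0 : AEStronglyMeasurable (limitInt (slopeCorr q) J B e) volume :=
    (Continuous.aestronglyMeasurable (by fun_prop)).mul hJm
  have hmL := fun ε => (hm ε).comp_measurePreserving hMP
  have hm0L := hm0.comp_measurePreserving hMP
  have hI0 := hF0'.integrable volume hA hβ1 hb1 hb2 hm0L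
  have hI : ∀ ε > 0, Integrable (scaledInt (slopePrim q) J d x e ε) volume := fun ε hε =>
    (hMP.integrable_comp_emb hME).1
      ((hF' ε hε).integrable volume hA hβ1 hb1 hb2 (hmL ε))
  have hfull := fun (ε : ℝ) (hε : 0 < ε) =>
    integrable_full hq hq_mono hqi hBq hd_lip.continuous hJm hε (hI ε hε)
  refine ⟨⟨1, one_pos, fun ε hε => (hfull ε hε.1).1⟩,
    integrable_mul_abs_rpow hα1 hα2 hΦc hΦi hΦL, ?_⟩
  have htend := LineBounds.tendsto_integral volume
    (F := fun ε p => scaledInt (slopePrim q) J d x e ε (lineMap e φ p))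
    (by filter_upwards [self_mem_nhdsWithin] with ε hε using hF' ε hε) hF0' hA hβ1 hb1 hb2
    hmL hm0L (fun v hv s => tendsto_scaledInt hG J d
      (tendsto_phaseRem_div hU hxU hdU hin (lineMap e φ (v, s))))
  have hJhom := kernel_homogeneous hg_even hJ
  rw [integral_limitInt (α := α) he1 hort
    (by rw [hfV', sub_add_cancel]; exact hJhom) B hI0] at htend
  -- on the slice `e + e^⊥` the kernel `J` is the weight in the definition of `M_g(e)`
  have hnorm : ∀ u, ‖e + φ u‖ ^ 2 = 1 + ‖u‖ ^ 2 := fun u => by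
    have := norm_sq_lineMap he1 hort u 1
    simpa [lineMap] using this
  have hpos : ∀ u, 0 < ‖e + φ u‖ := fun u => by
    have h := hnorm u
    by_contra hle
    have h0 : ‖e + φ u‖ = 0 := le_antisymm (not_lt.1 hle) (norm_nonneg _)
    rw [h0] at h
    nlinarith [sq_nonneg ‖u‖]
  have hne : ∀ u, e + φ u ≠ 0 := fun u => norm_pos_iff.1 (hpos u)
  have hrpow : ∀ u, ∀ c : ℝ, ‖e + φ u‖ ^ (-c) = (1 + ‖u‖ ^ 2) ^ (-c / 2) := fun u c => by
    rw [← hnorm u, ← Real.rpow_natCast, ← Real.rpow_mul (norm_nonneg _)]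
    congr 1; push_cast; ring
  have hweight : ∀ u, J (e + φ u) =
      g (‖e + φ u‖⁻¹ • (e + φ u)) * (1 + ‖u‖ ^ 2) ^ (-((N : ℝ) + α) / 2) := fun u => by
    rw [hJ _ (hne u), hrpow]
  have hycont : Continuous fun u => e + φ u := continuous_const.add φ.continuous
  have hwc : Continuous fun u => J (e + φ u) := hJc.comp_continuous hycont hne
  have hMint : ∀ i j, Integrable fun u => (e + φ u) i * (e + φ u) j * J (e + φ u) := by
    intro i j
    have hdom : Integrable fun u : EuclideanSpace ℝ (Fin (N - 1)) =>
        Cg * (1 + ‖u‖ ^ 2) ^ (-β / 2) :=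
      (integrable_rpow_neg_one_add_norm_sq hb1).const_mul Cg
    have hyk : ∀ k, Continuous fun u => (e + φ u) k := fun k =>
      (PiLp.continuous_apply 2 (fun _ : Fin N => ℝ) k).comp hycont
    refine hdom.mono' (((hyk i).mul (hyk j)).mul hwc).aestronglyMeasurable
      (.of_forall fun u => ?_)
    have h2 := rpow_shift (β := β) (k := 2) (hpos u)
    rw [Real.rpow_two, add_sub_cancel_right, hrpow u β] at h2
    rw [norm_mul, norm_mul, ← h2]
    calc _ ≤ ‖e + φ u‖ * ‖e + φ u‖ * (Cg * ‖e + φ u‖ ^ (-(β + 2))) := by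
          gcongr
          · exact PiLp.norm_apply_le (e + φ u) i
          · exact PiLp.norm_apply_le (e + φ u) j
          · exact hJb _ (hne u)
      _ = _ := by ring
  have htr := trace_mul_hessian (fun u => e + φ u) (fun u => J (e + φ u)) B hMint
  simp only [hweight] at htr htend
  rw [htr]
  refine htend.congr' ?_
  filter_upwards [self_mem_nhdsWithin] with ε hε
  rw [(hfull ε hε).2]
  exact hMP.integral_comp hME (scaledInt (slopePrim q) J d x e ε)
end
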